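/- arXiv:2512.04190 — 5 statements merged into one kernel-verified Lean document; each statement's English description precedes it below -/
import Mathlib

section
/- Let M(a,b,c,d) be the matrix of consequences described in the context, with entries in the rational numbers ℚ. Suppose v = (a,b,c,d) ∈ ℚ⁴ is a nonzero vector all of whose components lie in the set {0, 1, −1, 2, −2}, and suppose the rank of M(a,b,c,d) over ℚ is at most 35 (i.e., submaximal, the maximal possible rank being 36). Then there exist a nonzero scalar λ ∈ ℚ and a scalar t ∈ ℚ such that v = λ·u, where u is one of the following seven vectors: (1,0,0,t), (1,t,0,0), (1,−1,t,−1), (0,1,0,t), (0,1,t,0), (0,0,1,t), (0,0,0,1). -/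
/-- First components `p_i` (1-indexed columns) of the 42 quadruples. -/
def colP : Fin 42 → ℕ :=
  ![4,8,11,13,14,1,4,8,11,13,14,1,4,8,11,13,14,1,5,9,12,15,16,2,17,24,26,27,28,7,19,29,34,36,37,10,2,7,10,3,23,33]

/-- Second components `q_i`. -/
def colQ : Fin 42 → ℕ :=
  ![5,9,12,15,16,2,6,18,20,21,22,4,6,18,20,21,22,4,6,18,20,21,22,4,18,25,30,31,32,8,20,30,35,38,39,11,3,17,19,5,24,34]

/-- Third components `r_i`. -/
def colR : Fin 42 → ℕ :=
  ![21,31,38,40,41,13,17,24,26,27,28,7,18,25,30,31,32,8,18,25,30,31,32,8,20,30,35,38,39,11,21,31,38,40,41,13,15,23,29,9,26,36]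

/-- Fourth components `s_i`. -/
def colS : Fin 42 → ℕ :=
  ![22,32,39,41,42,14,22,32,39,41,42,14,19,29,34,36,37,10,20,30,35,38,39,11,21,31,38,40,41,13,22,32,39,41,42,14,16,28,33,12,27,37]

/-- The 42×42 matrix of consequences `M(a,b,c,d)` over a field `K`:
row `i` has entry `a` in column `p_i`, `b` in column `q_i`, `c` in column `r_i`,
`d` in column `s_i` (columns counted 1-based), and `0` elsewhere. -/
def consMatrix (K : Type*) [Field K] (a b c d : K) : Matrix (Fin 42) (Fin 42) K :=
  fun i j =>
    (if (j : ℕ) + 1 = colP i then a else 0) +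
    (if (j : ℕ) + 1 = colQ i then b else 0) +
    (if (j : ℕ) + 1 = colR i then c else 0) +
    (if (j : ℕ) + 1 = colS i then d else 0)

/-!
A vector in the kernel of `consMatrix` is a linear functional on the monomials in five letters with
two operators, so it assigns a value to every compatible pair of factors carrying an operator: a
letter, a block of three consecutive letters, or the whole word. Fixing one factor of the pair, the
identity with a single operator restricts the value as a function of the other factor. If `a ≠ 0`,
or if `b`, `c`, `d` are all nonzero, the values on blocks are determined by the others. What remains
is a symmetric `6 × 6` matrix, indexed by the five letters and the whole word, all of whose rows
satisfy three explicit linear relations. If these are independent, the rows lie in a space of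
dimension `3`, so the matrix lies in its symmetric square, of dimension `6`, and the rank is at
least `42 - 6 = 36`. For `a ≠ 0` the relations are dependent only on the listed families; for
`a = 0` and `b`, `c`, `d` nonzero they are always independent.
-/

section LinearAlgebra

variable {K ι κ E : Type*} [Field K]

theorem exists_finset_card_le_finrank_forall_eq_zero [Finite ι] (W : Submodule K (ι → K)) :
    ∃ T : Finset ι, T.card ≤ Module.finrank K W ∧ ∀ y ∈ W, (∀ t ∈ T, y t = 0) → y = 0 := by
  classical
  let coord (i : ι) : Module.Dual K W := (LinearMap.proj i).domRestrict W
  obtain ⟨κ, e, he, hspan, hindep⟩ := exists_linearIndependent' K coord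
  have : Fintype κ := @Fintype.ofFinite κ (Finite.of_injective e he)
  refine ⟨Finset.univ.image e, ?_, fun y hy hzero ↦ funext fun i ↦ ?_⟩
  · calc (Finset.univ.image e).card ≤ Fintype.card κ := Finset.card_image_le
      _ ≤ Module.finrank K (Module.Dual K W) := hindep.fintype_card_le_finrank
      _ = Module.finrank K W := Subspace.dual_finrank_eq
  · have hle : Submodule.span K (Set.range (coord ∘ e)) ≤
        LinearMap.ker (Module.Dual.eval K W ⟨y, hy⟩) :=
      Submodule.span_le.2 <| Set.range_subset_iff.2 fun k ↦ hzero (e k) <|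
        Finset.mem_image_of_mem e (Finset.mem_univ k)
    have hcoord : coord i ∈ Submodule.span K (Set.range (coord ∘ e)) :=
      hspan ▸ Submodule.subset_span (Set.mem_range_self i)
    exact hle hcoord

theorem eq_zero_of_isSymm_of_rows_mem {W : Submodule K (ι → K)} {T : Finset ι}
    (hT : ∀ y ∈ W, (∀ t ∈ T, y t = 0) → y = 0) {X : Matrix ι ι K} (hsymm : X.IsSymm)
    (hrow : ∀ i, X i ∈ W) (hzero : ∀ s ∈ T, ∀ t ∈ T, X s t = 0) : X = 0 := by
  have hrowT : ∀ s ∈ T, X s = 0 := fun s hs ↦ hT _ (hrow s) (hzero s hs)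
  exact funext fun i ↦ hT _ (hrow i) fun t ht ↦ by
    rw [← hsymm.apply, hrowT t ht, Pi.zero_apply]

theorem finrank_le_choose_two_of_isSymm [Finite ι] [AddCommGroup E] [Module K E]
    {W : Submodule K (ι → K)} {f : E →ₗ[K] Matrix ι ι K} (hf : Function.Injective f)
    (hsymm : ∀ x, (f x).IsSymm) (hrow : ∀ x i, f x i ∈ W) :
    Module.finrank K E ≤ (Module.finrank K W + 1).choose 2 := by
  obtain ⟨T, hcard, hT⟩ := exists_finset_card_le_finrank_forall_eq_zero W
  let restrict : E →ₗ[K] (Sym2 T → K) :=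
    { toFun x := Sym2.lift ⟨fun s t ↦ f x s t, fun s t ↦ ((hsymm x).apply s t).symm⟩
      map_add' x y := funext <| Sym2.ind fun s t ↦ by simp
      map_smul' r x := funext <| Sym2.ind fun s t ↦ by simp }
  have hinj : Function.Injective restrict := by
    refine (injective_iff_map_eq_zero restrict).2 fun x hx ↦ (map_eq_zero_iff f hf).1 ?_
    exact eq_zero_of_isSymm_of_rows_mem hT (hsymm x) (hrow x) fun s hs t ht ↦
      congrFun hx s(⟨s, hs⟩, ⟨t, ht⟩)
  calc Module.finrank K E ≤ Module.finrank K (Sym2 T → K) :=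
        LinearMap.finrank_le_finrank_of_injective hinj
    _ = (T.card + 1).choose 2 := by
        rw [Module.finrank_fintype_fun_eq_card, Sym2.card, Fintype.card_coe]
    _ ≤ (Module.finrank K W + 1).choose 2 := Nat.choose_le_choose 2 (by gcongr)

theorem rank_add_finrank_ker_mulVecLin [Fintype ι] (A : Matrix κ ι K) :
    A.rank + Module.finrank K (LinearMap.ker A.mulVecLin) = Fintype.card ι := by
  rw [Matrix.rank, LinearMap.finrank_range_add_finrank_ker, Module.finrank_fintype_fun_eq_card]

theorem linearIndependent_row_fin_three_iff {A : Matrix (Fin 3) ι K} :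
    LinearIndependent K A.row ↔ ∀ r s t : K,
      (∀ j, r * A 0 j + s * A 1 j + t * A 2 j = 0) → r = 0 ∧ s = 0 ∧ t = 0 := by
  rw [Fintype.linearIndependent_iff]
  refine ⟨fun h r s t hrst ↦ ?_, fun h g hg ↦ ?_⟩
  · have hzero := h ![r, s, t] (funext fun j ↦ by simpa [Fin.sum_univ_three] using hrst j)
    exact ⟨hzero 0, hzero 1, hzero 2⟩
  · have hzero := h (g 0) (g 1) (g 2) fun j ↦ by
      simpa [Fin.sum_univ_three] using congrFun hg j
    simpa [Fin.forall_fin_succ] using hzero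

end LinearAlgebra

/-- The (0-based) column of the monomial in `v w x y z` carrying one operator on each of the two
factors `s` and `t`: the indices `0, …, 4` stand for the five letters, `5` for the whole word
`vwxyz`, and `s = t` means that the operator is applied twice. -/
def pairCol : Fin 6 → Fin 6 → Fin 42 :=
  ![![5, 17, 19, 20, 21, 3],
    ![17, 24, 29, 30, 31, 7],
    ![19, 29, 34, 37, 38, 10],
    ![20, 30, 37, 39, 40, 12],
    ![21, 31, 38, 40, 41, 13],
    ![3, 7, 10, 12, 13, 0]]

/-- The (0-based) column of the monomial carrying one operator on the block of the three letters
`m, m + 1, m + 2` and one on the factor `t`, indexed as in `pairCol`. -/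
def blockCol : Fin 3 → Fin 6 → Fin 42 :=
  ![![4, 8, 11, 14, 15, 1], ![16, 23, 25, 26, 27, 6], ![18, 28, 33, 35, 36, 9]]

/-- The (0-based) column of the monomial carrying the operator twice on the block of the three
letters `m, m + 1, m + 2`. -/
def blockSqCol : Fin 3 → Fin 42 := ![2, 22, 32]

theorem pairCol_comm (s t : Fin 6) : pairCol s t = pairCol t s := by
  decide +revert

theorem forall_column {p : Fin 42 → Prop} (hpair : ∀ s t, p (pairCol s t))
    (hblock : ∀ m t, p (blockCol m t)) (hsq : ∀ m, p (blockSqCol m)) (j : Fin 42) : p j := by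
  have hcover : ∀ j, (∃ s t, pairCol s t = j) ∨ (∃ m t, blockCol m t = j) ∨
      ∃ m, blockSqCol m = j := by decide
  obtain ⟨s, t, rfl⟩ | ⟨m, t, rfl⟩ | ⟨m, rfl⟩ := hcover j
  exacts [hpair s t, hblock m t, hsq m]

section ConsequenceMatrix

variable {K : Type*} [Field K] {a b c d : K}

theorem consMatrix_mulVec_apply {i p q r s : Fin 42} (x : Fin 42 → K)
    (hcols : (colP i, colQ i, colR i, colS i) =
      ((p : ℕ) + 1, (q : ℕ) + 1, (r : ℕ) + 1, (s : ℕ) + 1)) :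
    (consMatrix K a b c d).mulVec x i = a * x p + b * x q + c * x r + d * x s := by
  obtain ⟨hp, hq, hr, hs⟩ : colP i = p + 1 ∧ colQ i = q + 1 ∧ colR i = r + 1 ∧ colS i = s + 1 := by
    simpa only [Prod.mk.injEq] using hcols
  simp only [Matrix.mulVec, dotProduct, consMatrix, hp, hq, hr, hs, Nat.add_right_cancel_iff,
    Fin.val_inj, add_mul, ite_mul, zero_mul, Finset.sum_add_distrib, Finset.sum_ite_eq',
    Finset.mem_univ, if_true]

/-- The two identities on `vwxyz` in which the operator acts on the block of the letters
`m, m + 1, m + 2`, as equations for a linear functional on the monomials with a single operator: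
its value is `z` on the block, and `y 0, …, y 4, y 5` on the letters and on the whole word. -/
structure BlockRelations (a b c d : K) (m : Fin 3) (y : Fin 6 → K) (z : K) : Prop where
  word : a * y 5 + ![b * z + c * y 3 + d * y 4,
    b * y 0 + c * z + d * y 4, b * y 0 + c * y 1 + d * z] m = 0
  block : a * z + ![b * y 0 + c * y 1 + d * y 2,
    b * y 1 + c * y 2 + d * y 3, b * y 2 + c * y 3 + d * y 4] m = 0

theorem BlockRelations.eq_zero {m : Fin 3} {y : Fin 6 → K} {z : K}
    (h : BlockRelations a b c d m y z) (helim : a ≠ 0 ∨ ![b, c, d] m ≠ 0) (hy : y = 0) :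
    z = 0 := by
  subst hy
  obtain ha | hm := helim
  · have hblock := h.block
    fin_cases m <;> simpa [ha] using hblock
  · have hword := h.word
    fin_cases m <;> simp_all

section Kernel

variable {x : Fin 42 → K}

theorem apply_eq_zero_of_mulVec_eq_zero (hx : (consMatrix K a b c d).mulVec x = 0)
    {i p q r s : Fin 42} (hcols : (colP i, colQ i, colR i, colS i) =
      ((p : ℕ) + 1, (q : ℕ) + 1, (r : ℕ) + 1, (s : ℕ) + 1)) :
    a * x p + (b * x q + c * x r + d * x s) = 0 := by
  rw [← add_assoc, ← add_assoc, ← consMatrix_mulVec_apply x hcols, hx, Pi.zero_apply]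

theorem blockRelations_of_mulVec_eq_zero (hx : (consMatrix K a b c d).mulVec x = 0)
    (m : Fin 3) (t : Fin 6) :
    BlockRelations a b c d m (fun s ↦ x (pairCol t s)) (x (blockCol m t)) := by
  constructor
  · have hword {p q r s} := apply_eq_zero_of_mulVec_eq_zero hx
      (i := ⟨6 * m + t, by omega⟩) (p := p) (q := q) (r := r) (s := s)
    fin_cases m <;> exact hword (by clear hword; revert t; decide)
  · have hblock {p q r s} := apply_eq_zero_of_mulVec_eq_zero hx
      (i := ⟨18 + 6 * m + t, by omega⟩) (p := p) (q := q) (r := r) (s := s)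
    fin_cases m <;> exact hblock (by clear hblock; revert t; decide)

theorem blockRelations_sq_of_mulVec_eq_zero (hx : (consMatrix K a b c d).mulVec x = 0)
    (m : Fin 3) :
    BlockRelations a b c d m (fun s ↦ x (blockCol m s)) (x (blockSqCol m)) := by
  constructor
  · have hword {p q r s} := apply_eq_zero_of_mulVec_eq_zero hx
      (i := ⟨36 + m, by omega⟩) (p := p) (q := q) (r := r) (s := s)
    fin_cases m <;> exact hword (by decide)
  · have hblock {p q r s} := apply_eq_zero_of_mulVec_eq_zero hx
      (i := ⟨39 + m, by omega⟩) (p := p) (q := q) (r := r) (s := s)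
    fin_cases m <;> exact hblock (by decide)

theorem eq_zero_of_mulVec_eq_zero (helim : a ≠ 0 ∨ ∀ m, ![b, c, d] m ≠ 0)
    (hx : (consMatrix K a b c d).mulVec x = 0) (hpair : ∀ s t, x (pairCol s t) = 0) : x = 0 := by
  have hblock (m t) : x (blockCol m t) = 0 :=
    (blockRelations_of_mulVec_eq_zero hx m t).eq_zero (helim.imp_right (· m)) (funext (hpair t))
  have hsq (m) : x (blockSqCol m) = 0 :=
    (blockRelations_sq_of_mulVec_eq_zero hx m).eq_zero (helim.imp_right (· m)) (funext (hblock m))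
  exact funext (forall_column hpair hblock hsq)

end Kernel

theorem le_rank_consMatrix_of_relations {R : Matrix (Fin 3) (Fin 6) K}
    (hR : LinearIndependent K R.row) (helim : a ≠ 0 ∨ ∀ m, ![b, c, d] m ≠ 0)
    (hrel : ∀ (y : Fin 6 → K) (z : Fin 3 → K), (∀ m, BlockRelations a b c d m y (z m)) →
      R.mulVec y = 0) :
    36 ≤ (consMatrix K a b c d).rank := by
  let pairMatrix : LinearMap.ker (consMatrix K a b c d).mulVecLin →ₗ[K]
      Matrix (Fin 6) (Fin 6) K :=
    { toFun x := Matrix.of fun s t ↦ x.1 (pairCol s t)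
      map_add' _ _ := rfl
      map_smul' _ _ := rfl }
  have hinj : Function.Injective pairMatrix :=
    (injective_iff_map_eq_zero pairMatrix).2 fun x hx ↦ Subtype.ext <|
      eq_zero_of_mulVec_eq_zero helim x.2 fun s t ↦ congrFun₂ hx s t
  have hsymm (x) : (pairMatrix x).IsSymm :=
    Matrix.IsSymm.ext fun s t ↦ congrArg x.1 (pairCol_comm t s)
  have hrow (x s) : pairMatrix x s ∈ LinearMap.ker R.mulVecLin :=
    hrel _ _ fun m ↦ blockRelations_of_mulVec_eq_zero x.2 m s
  have hkerR : Module.finrank K (LinearMap.ker R.mulVecLin) = 3 := by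
    have := rank_add_finrank_ker_mulVecLin R
    rw [hR.rank_matrix, Fintype.card_fin, Fintype.card_fin] at this
    omega
  have hker : Module.finrank K (LinearMap.ker (consMatrix K a b c d).mulVecLin) ≤ 6 := by
    simpa [hkerR, Nat.choose] using finrank_le_choose_two_of_isSymm hinj hsymm hrow
  have hrank := rank_add_finrank_ker_mulVecLin (consMatrix K a b c d)
  rw [Fintype.card_fin] at hrank
  omega

/-- The relations between the operator on the letters and on the whole word obtained by eliminating
the blocks: row `m` is `a` times the equation `word` of `BlockRelations` minus the `m`-th of
`b, c, d` times the equation `block`. -/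
def wordRelations (a b c d : K) : Matrix (Fin 3) (Fin 6) K :=
  !![-b ^ 2, -(b * c), -(b * d), a * c, a * d, a ^ 2;
    a * b, -(b * c), -c ^ 2, -(c * d), a * d, a ^ 2;
    a * b, a * c, -(b * d), -(c * d), -d ^ 2, a ^ 2]

theorem wordRelations_mulVec {y : Fin 6 → K} {z : Fin 3 → K}
    (h : ∀ m, BlockRelations a b c d m y (z m)) : (wordRelations a b c d).mulVec y = 0 := by
  funext m
  have hword := (h m).word
  have hblock := (h m).block
  fin_cases m <;>
    simp only [wordRelations, Matrix.mulVec, dotProduct, Fin.sum_univ_six, Fin.zero_eta,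
      Fin.mk_one, Fin.reduceFinMk, Matrix.of_apply, Matrix.cons_val, Pi.zero_apply]
      at hword hblock ⊢
  · linear_combination a * hword - b * hblock
  · linear_combination a * hword - c * hblock
  · linear_combination a * hword - d * hblock

theorem linearIndependent_wordRelations (ha : a ≠ 0) (hbc : ¬(b = 0 ∧ c = 0))
    (hcd : ¬(c = 0 ∧ d = 0)) (hbd : ¬(a + b = 0 ∧ a + d = 0)) :
    LinearIndependent K (wordRelations a b c d).row := by
  refine linearIndependent_row_fin_three_iff.2 fun r s t hcol ↦ ?_
  have h₀ : r * -b ^ 2 + s * (a * b) + t * (a * b) = 0 := hcol 0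
  have h₁ : r * -(b * c) + s * -(b * c) + t * (a * c) = 0 := hcol 1
  have h₂ : r * -(b * d) + s * -c ^ 2 + t * -(b * d) = 0 := hcol 2
  have h₃ : r * (a * c) + s * -(c * d) + t * -(c * d) = 0 := hcol 3
  have h₄ : r * (a * d) + s * (a * d) + t * -d ^ 2 = 0 := hcol 4
  have h₅ : r * a ^ 2 + s * a ^ 2 + t * a ^ 2 = 0 := hcol 5
  have hsum : r + s + t = 0 := by
    refine (mul_eq_zero_iff_left (pow_ne_zero 2 ha)).1 ?_
    linear_combination h₅
  have hbr : b * (a + b) * r = 0 := by linear_combination a * b * hsum - h₀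
  have hct : c * (a + b) * t = 0 := by linear_combination h₁ + b * c * hsum
  have hs : (b * d - c ^ 2) * s = 0 := by linear_combination h₂ + b * d * hsum
  have hcr : c * (a + d) * r = 0 := by linear_combination h₃ + c * d * hsum
  have hdt : d * (a + d) * t = 0 := by linear_combination a * d * hsum - h₄
  -- If one of `r`, `s`, `t` is nonzero, then by `hsum` two are, and their cofactors above vanish.
  rw [mul_eq_zero, mul_eq_zero] at hbr hct hcr hdt
  rw [mul_eq_zero] at hs
  have hr : r = 0 := by
    by_contra
    grind
  have ht : t = 0 := by
    by_contra
    grind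
  exact ⟨hr, by simpa [hr, ht] using hsum, ht⟩

theorem eq_zero_or_add_eq_zero_of_rank_consMatrix_le (ha : a ≠ 0)
    (hrank : (consMatrix K a b c d).rank ≤ 35) :
    (b = 0 ∧ c = 0) ∨ (c = 0 ∧ d = 0) ∨ (a + b = 0 ∧ a + d = 0) := by
  by_contra! ⟨hbc, hcd, hbd⟩
  have hindep := linearIndependent_wordRelations ha (not_and.2 hbc) (not_and.2 hcd) (not_and.2 hbd)
  have := le_rank_consMatrix_of_relations hindep (.inl ha) fun _ _ ↦ wordRelations_mulVec
  omega

/-- The relations between the operator on the letters alone given by the equations `block` of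
`BlockRelations` for `a = 0`; the last column, for the whole word, keeps the format of
`wordRelations`. -/
def letterRelations (b c d : K) : Matrix (Fin 3) (Fin 6) K :=
  !![b, c, d, 0, 0, 0;
    0, b, c, d, 0, 0;
    0, 0, b, c, d, 0]

theorem letterRelations_mulVec {y : Fin 6 → K} {z : Fin 3 → K}
    (h : ∀ m, BlockRelations 0 b c d m y (z m)) : (letterRelations b c d).mulVec y = 0 := by
  funext m
  have hblock := (h m).block
  fin_cases m <;> simpa [letterRelations, Matrix.mulVec, dotProduct, Fin.sum_univ_six] using hblock

theorem linearIndependent_letterRelations (hb : b ≠ 0) :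
    LinearIndependent K (letterRelations b c d).row := by
  refine linearIndependent_row_fin_three_iff.2 fun r s t hcol ↦ ?_
  have hr : r = 0 := by simpa [letterRelations, hb] using hcol 0
  have hs : s = 0 := by simpa [letterRelations, hb, hr] using hcol 1
  have ht : t = 0 := by simpa [letterRelations, hb, hr, hs] using hcol 2
  exact ⟨hr, hs, ht⟩

theorem exists_coeff_eq_zero_of_rank_consMatrix_zero_le (hrank : (consMatrix K 0 b c d).rank ≤ 35) :
    b = 0 ∨ c = 0 ∨ d = 0 := by
  by_contra! ⟨hb, hc, hd⟩
  have helim : ∀ m, ![b, c, d] m ≠ 0 := by simp [Fin.forall_fin_succ, hb, hc, hd]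
  have := le_rank_consMatrix_of_relations (linearIndependent_letterRelations hb) (.inr helim)
    fun _ _ ↦ letterRelations_mulVec
  omega

end ConsequenceMatrix

theorem stmt_0_general {K : Type*} [Field K] (a b c d : K)
    (hne : (a, b, c, d) ≠ (0, 0, 0, 0)) (hrank : (consMatrix K a b c d).rank ≤ 35) :
    ∃ lam t : K, lam ≠ 0 ∧
      ((a, b, c, d) = (lam * 1, lam * 0, lam * 0, lam * t) ∨
       (a, b, c, d) = (lam * 1, lam * t, lam * 0, lam * 0) ∨
       (a, b, c, d) = (lam * 1, lam * (-1), lam * t, lam * (-1)) ∨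
       (a, b, c, d) = (lam * 0, lam * 1, lam * 0, lam * t) ∨
       (a, b, c, d) = (lam * 0, lam * 1, lam * t, lam * 0) ∨
       (a, b, c, d) = (lam * 0, lam * 0, lam * 1, lam * t) ∨
       (a, b, c, d) = (lam * 0, lam * 0, lam * 0, lam * 1)) := by
  simp only [Prod.mk.injEq, mul_zero, mul_one]
  by_cases ha : a = 0
  · subst ha
    by_cases hb : b = 0
    · by_cases hc : c = 0
      · exact ⟨d, 0, by grind⟩
      · exact ⟨c, d / c, by grind⟩
    · obtain h | rfl | rfl := exists_coeff_eq_zero_of_rank_consMatrix_zero_le hrank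
      · exact absurd h hb
      · exact ⟨b, d / b, by grind⟩
      · exact ⟨b, c / b, by grind⟩
  · obtain ⟨rfl, rfl⟩ | ⟨rfl, rfl⟩ | ⟨hb, hd⟩ :=
      eq_zero_or_add_eq_zero_of_rank_consMatrix_le ha hrank
    · exact ⟨a, d / a, by grind⟩
    · exact ⟨a, b / a, by grind⟩
    · exact ⟨a, c / a, by grind⟩

/-- If `v = (a,b,c,d) ∈ ℚ⁴` is nonzero, has all components in `{0, 1, -1, 2, -2}`,
and the matrix of consequences `M(a,b,c,d)` has rank at most 35 over `ℚ` (submaximal,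
the maximum possible rank being 36), then `v` is a nonzero scalar multiple `λ·u` of one
of the seven vectors `u = (1,0,0,t)`, `(1,t,0,0)`, `(1,-1,t,-1)`, `(0,1,0,t)`,
`(0,1,t,0)`, `(0,0,1,t)`, `(0,0,0,1)` for some `t ∈ ℚ`. -/
theorem stmt_0 (a b c d : ℚ)
    (hne : (a, b, c, d) ≠ (0, 0, 0, 0))
    (ha : a ∈ ({0, 1, -1, 2, -2} : Set ℚ))
    (hb : b ∈ ({0, 1, -1, 2, -2} : Set ℚ))
    (hc : c ∈ ({0, 1, -1, 2, -2} : Set ℚ))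
    (hd : d ∈ ({0, 1, -1, 2, -2} : Set ℚ))
    (hrank : (consMatrix ℚ a b c d).rank ≤ 35) :
    ∃ lam t : ℚ, lam ≠ 0 ∧
      ((a, b, c, d) = (lam * 1, lam * 0, lam * 0, lam * t) ∨
       (a, b, c, d) = (lam * 1, lam * t, lam * 0, lam * 0) ∨
       (a, b, c, d) = (lam * 1, lam * (-1), lam * t, lam * (-1)) ∨
       (a, b, c, d) = (lam * 0, lam * 1, lam * 0, lam * t) ∨
       (a, b, c, d) = (lam * 0, lam * 1, lam * t, lam * 0) ∨
       (a, b, c, d) = (lam * 0, lam * 0, lam * 1, lam * t) ∨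
       (a, b, c, d) = (lam * 0, lam * 0, lam * 0, lam * 1)) :=
  stmt_0_general a b c d hne hrank
end

section
/- Let M(a,b,c,d) be the matrix of consequences described in the context, with entries in ℚ. Let S be the set of nonzero vectors v = (a,b,c,d) ∈ ℤ⁴ whose components lie in {0, 1, −1, 2, −2}, whose first nonzero component is positive, and whose components have greatest common divisor 1. Then for v ∈ S, the rank of M(v) over ℚ is strictly less than 36 if and only if v is one of the following 41 vectors, in which case the rank equals the indicated value: (1,0,0,0)→27, (1,0,0,1)→32, (1,0,0,−1)→27, (1,0,0,2)→32, (1,0,0,−2)→32, (1,1,0,0)→32, (1,−1,0,0)→27, (1,−1,0,−1)→32, (1,−1,1,−1)→27, (1,−1,−1,−1)→27, (1,−1,2,−1)→32, (1,−1,−2,−1)→32, (1,2,0,0)→32, (1,−2,0,0)→32, (2,0,0,1)→32, (2,0,0,−1)→32, (2,1,0,0)→32, (2,−1,0,0)→32, (2,−2,1,−2)→32, (2,−2,−1,−2)→32, (0,1,0,0)→26, (0,1,0,1)→34, (0,1,0,−1)→31, (0,1,0,2)→34, (0,1,0,−2)→34, (0,1,1,0)→31, (0,1,−1,0)→31, (0,1,2,0)→31,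 (0,1,−2,0)→31, (0,2,0,1)→34, (0,2,0,−1)→34, (0,2,1,0)→31, (0,2,−1,0)→31, (0,0,1,0)→26, (0,0,1,1)→31, (0,0,1,−1)→31, (0,0,1,2)→31, (0,0,1,−2)→31, (0,0,2,1)→31, (0,0,2,−1)→31, (0,0,0,1)→26. For all other v ∈ S, the rank of M(v) over ℚ equals 36. -/
/-- The table of the 41 submaximal-rank coefficient vectors of degree 3 and
multiplicity 1, paired with the corresponding rank of the matrix of consequences. -/
def submaxTable : List ((ℤ × ℤ × ℤ × ℤ) × ℕ) :=
  [((1,0,0,0),27), ((1,0,0,1),32), ((1,0,0,-1),27), ((1,0,0,2),32), ((1,0,0,-2),32),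
   ((1,1,0,0),32), ((1,-1,0,0),27), ((1,-1,0,-1),32), ((1,-1,1,-1),27), ((1,-1,-1,-1),27),
   ((1,-1,2,-1),32), ((1,-1,-2,-1),32), ((1,2,0,0),32), ((1,-2,0,0),32), ((2,0,0,1),32),
   ((2,0,0,-1),32), ((2,1,0,0),32), ((2,-1,0,0),32), ((2,-2,1,-2),32), ((2,-2,-1,-2),32),
   ((0,1,0,0),26), ((0,1,0,1),34), ((0,1,0,-1),31), ((0,1,0,2),34), ((0,1,0,-2),34),
   ((0,1,1,0),31), ((0,1,-1,0),31), ((0,1,2,0),31), ((0,1,-2,0),31), ((0,2,0,1),34),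
   ((0,2,0,-1),34), ((0,2,1,0),31), ((0,2,-1,0),31), ((0,0,1,0),26), ((0,0,1,1),31),
   ((0,0,1,-1),31), ((0,0,1,2),31), ((0,0,1,-2),31), ((0,0,2,1),31), ((0,0,2,-1),31),
   ((0,0,0,1),26)]

/-!
Index the columns of `M` by unordered pairs of positions: the letters `0, …, 4`, the whole word,
and one of the three bracketed triples of consecutive letters. A vector in the kernel of `M` is
then a family of three symmetric bilinear forms on `K ^ 7`, one for each triple, which agree on the
core `K ^ 6` spanned by the letters and the word; the rows say that the `j`-th form has two
relations, `L` applied to the word with the triple bracketed and `L` applied to the triple, in its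
radical. Counting dimensions of glued forms, `dim ker M` is `(7 - dim V).choose 2`, where `V` is
the span of the relations that are forced on the core, plus the dimensions of the spaces of forms
that vanish on the core.

If `a ≠ 0`, eliminating the triple gives three vectors `w + ε j`, and independence of `w` and the
nonzero `ε j` shows that `dim V` is one more than the number of nonzero `ε j`, but at most `3`.
If `a = 0`, then `V` is spanned by the three shifts of `(b, c, d)`, and by one more vector if
`c = 0` and `b d (b + d) ≠ 0`; each zero among `b, c, d` contributes `5` forms that vanish on the
core. The rank over any field is thus in closed form, and the table is a finite check.
-/

open Module

section SymmForms

variable {K E : Type*} [Field K] [AddCommGroup E] [Module K E]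

/-- The space of symmetric bilinear forms on `E` whose radical contains `V`. -/
def symmForms (V : Submodule K E) : Submodule K (E →ₗ[K] E →ₗ[K] K) where
  carrier := {B | (∀ x y, B x y = B y x) ∧ ∀ v ∈ V, B v = 0}
  add_mem' hB hC := ⟨fun x y => by simp [hB.1 x y, hC.1 x y],
    fun v hv => by simp [hB.2 v hv, hC.2 v hv]⟩
  zero_mem' := by simp
  smul_mem' c B hB := ⟨fun x y => by simp [hB.1 x y], fun v hv => by simp [hB.2 v hv]⟩

-- Instance search alone does not reliably see through the nested spaces of linear maps.
instance (V : Submodule K E) : AddCommGroup (symmForms V) :=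
  Submodule.addCommGroup (M := E →ₗ[K] E →ₗ[K] K) _

/-- In a basis, a symmetric bilinear form is a function on unordered pairs of basis indices. -/
noncomputable def symmFormsBotEquiv {ι : Type*} [Fintype ι] [DecidableEq ι] (e : Basis ι K E) :
    symmForms (⊥ : Submodule K E) ≃ₗ[K] (Sym2 ι → K) where
  toFun B := Sym2.lift ⟨fun i j => B.1 (e i) (e j), fun i j => B.2.1 (e i) (e j)⟩
  map_add' B C := by ext ⟨i, j⟩; rfl
  map_smul' c B := by ext ⟨i, j⟩; rfl
  invFun f := ⟨e.constr K fun i => e.constr K fun j => f s(i, j), fun x y => by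
    have hflip : e.constr K (fun i => e.constr K fun j => f s(i, j)) =
        (e.constr K fun i => e.constr K fun j => f s(i, j)).flip :=
      e.ext fun i => e.ext fun j => by simp [Sym2.eq_swap]
    exact congr($hflip x y), by simp⟩
  left_inv B := Subtype.ext <| e.ext fun i => e.ext fun j => by simp
  right_inv f := by
    ext z
    induction z with | _ i j
    simp

theorem symmFormsBotEquiv_symm_basis {ι : Type*} [Fintype ι] [DecidableEq ι] (e : Basis ι K E)
    (f : Sym2 ι → K) (i j : ι) : ((symmFormsBotEquiv e).symm f).1 (e i) (e j) = f s(i, j) :=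
  congr_fun ((symmFormsBotEquiv e).apply_symm_apply f) s(i, j)

/-- A symmetric form with radical containing `V` is a symmetric form on `E ⧸ V`. -/
noncomputable def symmFormsQuotientEquiv (V : Submodule K E) :
    symmForms (⊥ : Submodule K (E ⧸ V)) ≃ₗ[K] symmForms V where
  toFun B := ⟨B.1.compl₁₂ V.mkQ V.mkQ, fun x y => B.2.1 _ _, fun v hv => by
    ext; simp [(Submodule.Quotient.mk_eq_zero V).2 hv]⟩
  map_add' B C := rfl
  map_smul' c B := rfl
  invFun B := ⟨V.liftQ (V.liftQ B.1 B.2.2).flip fun v hv => by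
    ext x
    change B.1 x v = 0
    rw [B.2.1, B.2.2 v hv, LinearMap.zero_apply], fun x y => by
    induction x using Submodule.Quotient.induction_on
    induction y using Submodule.Quotient.induction_on
    exact B.2.1 _ _, by simp⟩
  left_inv B := Subtype.ext <| by ext x y; exact B.2.1 _ _
  right_inv B := Subtype.ext <| by ext x y; exact B.2.1 _ _

theorem finrank_symmForms [FiniteDimensional K E] (V : Submodule K E) :
    finrank K (symmForms V) = (finrank K E - finrank K V + 1).choose 2 := by
  classical
  rw [← (symmFormsQuotientEquiv V).finrank_eq, (symmFormsBotEquiv (finBasis K (E ⧸ V))).finrank_eq,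
    finrank_fintype_fun_eq_card, Sym2.card, Fintype.card_fin, Submodule.finrank_quotient]

variable {F : Type*} [AddCommGroup F] [Module K F]

/-- Restriction along `f : E →ₗ[K] F` of the symmetric forms on `F` with radical containing `U`. -/
def symmFormsRestrict (f : E →ₗ[K] F) (U : Submodule K F) :
    symmForms U →ₗ[K] (E →ₗ[K] E →ₗ[K] K) where
  toFun B := B.1.compl₁₂ f f
  map_add' _ _ := rfl
  map_smul' _ _ := rfl

theorem symmFormsRestrict_apply (f : E →ₗ[K] F) (U : Submodule K F) (B : symmForms U) (x y : E) :
    symmFormsRestrict f U B x y = B.1 (f x) (f y) :=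
  rfl

-- A linear retraction of `F ⧸ U` onto `E ⧸ U.comap f` extends forms from `E` to `F`.
theorem range_symmFormsRestrict (f : E →ₗ[K] F) (U : Submodule K F) :
    (symmFormsRestrict f U).range = symmForms (U.comap f) := by
  ext B
  constructor
  · rintro ⟨C, rfl⟩
    refine ⟨fun x y => C.2.1 _ _, fun v hv => LinearMap.ext fun y => ?_⟩
    exact congr($(C.2.2 _ hv) (f y))
  · intro hB
    obtain ⟨D, hD⟩ := (symmFormsQuotientEquiv (U.comap f)).surjective ⟨B, hB⟩
    have hker : ((U.comap f).mapQ U f le_rfl).ker = ⊥ := by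
      simp [Submodule.ker_mapQ]
    obtain ⟨g, hg⟩ := LinearMap.exists_leftInverse_of_injective _ hker
    refine ⟨⟨D.1.compl₁₂ (g ∘ₗ U.mkQ) (g ∘ₗ U.mkQ), fun x y => D.2.1 _ _, fun u hu => ?_⟩, ?_⟩
    · ext y
      simp [(Submodule.Quotient.mk_eq_zero U).2 hu]
    · ext x y
      have hretract (x : E) : g (U.mkQ (f x)) = (U.comap f).mkQ x :=
        congr($hg (Submodule.Quotient.mk x))
      calc D.1 (g (U.mkQ (f x))) (g (U.mkQ (f y)))
          = D.1 ((U.comap f).mkQ x) ((U.comap f).mkQ y) := by rw [hretract, hretract]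
        _ = B x y := congr(($hD).1 x y)

end SymmForms

section FiberProduct

variable {K ι X : Type*} {W : ι → Type*} [Field K] [AddCommGroup X] [Module K X]
  [∀ i, AddCommGroup (W i)] [∀ i, Module K (W i)]

/-- The fibre product of the linear maps `r i : W i →ₗ[K] X` over `X`, for `i : ι`. -/
def fiberProduct (r : ∀ i, W i →ₗ[K] X) : Submodule K (X × ∀ i, W i) where
  carrier := {z | ∀ i, r i (z.2 i) = z.1}
  add_mem' hy hz i := by simp [hy i, hz i]
  zero_mem' := by simp
  smul_mem' c z hz i := by simp [hz i]

instance (r : ∀ i, W i →ₗ[K] X) : AddCommGroup (fiberProduct r) :=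
  Submodule.addCommGroup _

instance [Finite ι] [FiniteDimensional K X] [∀ i, FiniteDimensional K (W i)]
    (r : ∀ i, W i →ₗ[K] X) : FiniteDimensional K (fiberProduct r) :=
  FiniteDimensional.finiteDimensional_submodule _

theorem finrank_fiberProduct [Fintype ι] [FiniteDimensional K X] [∀ i, FiniteDimensional K (W i)]
    (r : ∀ i, W i →ₗ[K] X) :
    finrank K (fiberProduct r) =
      finrank K (⨅ i, (r i).range : Submodule K X) + ∑ i, finrank K (r i).ker := by
  let π : fiberProduct r →ₗ[K] X := LinearMap.fst K X _ ∘ₗ (fiberProduct r).subtype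
  have hrange : π.range = ⨅ i, (r i).range := by
    ext x
    simp only [Submodule.mem_iInf, LinearMap.mem_range]
    constructor
    · rintro ⟨z, rfl⟩ i
      exact ⟨z.1.2 i, z.2 i⟩
    · intro hx
      choose w hw using hx
      exact ⟨⟨(x, w), hw⟩, rfl⟩
  let kerEquiv : π.ker ≃ₗ[K] ∀ i, (r i).ker :=
    { toFun z i := ⟨z.1.1.2 i, (z.1.2 i).trans z.2⟩
      map_add' _ _ := rfl
      map_smul' _ _ := rfl
      invFun w := ⟨⟨(0, fun i => w i), fun i => (w i).2⟩, rfl⟩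
      left_inv z := Subtype.ext <| Subtype.ext <| Prod.ext (Eq.symm z.2) rfl
      right_inv _ := rfl }
  rw [← π.finrank_range_add_finrank_ker, hrange, kerEquiv.finrank_eq, finrank_pi_fintype]

end FiberProduct

section GluedForms

variable {K E F ι : Type*} [Field K] [AddCommGroup E] [Module K E] [AddCommGroup F] [Module K F]

theorem iInf_symmForms [Nonempty ι] (V : ι → Submodule K E) :
    ⨅ j, symmForms (V j) = symmForms (⨆ j, V j) := by
  ext B
  simp only [Submodule.mem_iInf]
  constructor
  · intro hB
    have hle : ⨆ j, V j ≤ B.ker := iSup_le fun j v hv => (hB j).2 v hv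
    exact ⟨(hB (Classical.arbitrary ι)).1, fun v hv => hle hv⟩
  · exact fun hB j => ⟨hB.1, fun v hv => hB.2 v (Submodule.mem_iSup_of_mem j hv)⟩

/-- Families of symmetric forms on `F`, the `j`-th with radical containing `U j`, that have the
same restriction along `f : E →ₗ[K] F`; the first component is that restriction. -/
abbrev gluedForms (f : E →ₗ[K] F) (U : ι → Submodule K F) :
    Submodule K ((E →ₗ[K] E →ₗ[K] K) × ∀ j, symmForms (U j)) :=
  fiberProduct (X := E →ₗ[K] E →ₗ[K] K) (W := fun j => symmForms (U j))
    fun j => symmFormsRestrict f (U j)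

/-- Forgetting the conditions on the radicals in a glued family. -/
def gluedFormsInclusion (f : E →ₗ[K] F) (U : ι → Submodule K F) :
    gluedForms f U →ₗ[K] gluedForms f fun _ : ι => ⊥ where
  toFun B := ⟨(B.1.1, fun j => ⟨(B.1.2 j).1, (B.1.2 j).2.1, by simp⟩), B.2⟩
  map_add' _ _ := rfl
  map_smul' _ _ := rfl

theorem gluedFormsInclusion_injective (f : E →ₗ[K] F) (U : ι → Submodule K F) :
    Function.Injective (gluedFormsInclusion f U) := fun _ _ hBC =>
  Subtype.ext <| Prod.ext congr(($hBC).1.1) <| funext fun j =>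
    Subtype.ext congr((($hBC).1.2 j).1)

theorem mem_range_gluedFormsInclusion (f : E →ₗ[K] F) (U : ι → Submodule K F)
    (B : gluedForms f fun _ : ι => ⊥) :
    B ∈ (gluedFormsInclusion f U).range ↔ ∀ j, ∀ u ∈ U j, (B.1.2 j).1 u = 0 := by
  constructor
  · rintro ⟨C, rfl⟩ j
    exact (C.1.2 j).2.2
  · intro hB
    exact ⟨⟨(B.1.1, fun j => ⟨(B.1.2 j).1, (B.1.2 j).2.1, hB j⟩), B.2⟩, rfl⟩

theorem finrank_ker_symmFormsRestrict [FiniteDimensional K E] [FiniteDimensional K F]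
    (f : E →ₗ[K] F) (U : Submodule K F) :
    finrank K (symmFormsRestrict f U).ker = (finrank K F - finrank K U + 1).choose 2 -
      (finrank K E - finrank K (U.comap f) + 1).choose 2 := by
  have := LinearMap.finrank_range_add_finrank_ker (V := symmForms U) (V₂ := E →ₗ[K] E →ₗ[K] K)
    (symmFormsRestrict f U)
  rw [range_symmFormsRestrict, finrank_symmForms, finrank_symmForms] at this
  exact Nat.eq_sub_of_add_eq' this

theorem finrank_gluedForms [FiniteDimensional K E] [FiniteDimensional K F] [Fintype ι] [Nonempty ι]
    (f : E →ₗ[K] F) (U : ι → Submodule K F) :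
    finrank K (gluedForms f U) =
      (finrank K E - finrank K (⨆ j, (U j).comap f : Submodule K E) + 1).choose 2 +
      ∑ j, ((finrank K F - finrank K (U j) + 1).choose 2 -
        (finrank K E - finrank K ((U j).comap f) + 1).choose 2) := by
  rw [gluedForms, finrank_fiberProduct, iInf_congr fun j => range_symmFormsRestrict f (U j),
    iInf_symmForms, finrank_symmForms]
  simp only [finrank_ker_symmFormsRestrict]

end GluedForms

section Span

variable {K E F : Type*} [Field K] [AddCommGroup E] [Module K E] [AddCommGroup F] [Module K F]

theorem comap_span_pair_eq_span_singleton {f : E →ₗ[K] F} (hf : Function.Injective f)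
    {φ : F →ₗ[K] K} (hφ : ∀ z, φ (f z) = 0) {x y : F} {u : E}
    (hu : f u = φ y • x - φ x • y) (hxy : φ x ≠ 0 ∨ φ y ≠ 0) :
    (Submodule.span K {x, y}).comap f = Submodule.span K {u} := by
  ext z
  rw [Submodule.mem_comap, Submodule.mem_span_pair, Submodule.mem_span_singleton]
  constructor
  · rintro ⟨s, t, hst⟩
    have hlast : s * φ x + t * φ y = 0 := by simpa [hφ] using congr(φ $hst)
    obtain hx | hy := hxy
    · refine ⟨-t / φ x, hf ?_⟩
      have hs : s = -t / φ x * φ y := by field_simp; linear_combination hlast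
      rw [map_smul, hu, ← hst, hs]
      match_scalars <;> field_simp
    · refine ⟨s / φ y, hf ?_⟩
      have ht : t = -(s / φ y) * φ x := by field_simp; linear_combination hlast
      rw [map_smul, hu, ← hst, ht]
      match_scalars <;> field_simp
  · rintro ⟨r, rfl⟩
    refine ⟨r * φ y, -(r * φ x), ?_⟩
    rw [map_smul, hu]
    module

theorem linearIndependent_option_elim {ι : Type*} [Fintype ι] {w : E} {ε : ι → E}
    (h : ∀ (r : K) (x : ι → K), r • w + ∑ j, x j • ε j = 0 → r = 0 ∧ ∀ j, x j • ε j = 0) :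
    LinearIndependent K fun o : Option {j // ε j ≠ 0} => o.elim w fun j => ε j := by
  classical
  refine Fintype.linearIndependent_iff.2 fun x hx => ?_
  let y : ι → K := fun j => if hj : ε j ≠ 0 then x (some ⟨j, hj⟩) else 0
  have hy (j : {j // ε j ≠ 0}) : y j = x (some j) := dif_pos j.2
  have hsum : ∑ j, y j • ε j = ∑ j : {j // ε j ≠ 0}, x (some j) • ε j := by
    simp only [← hy]
    rw [← Finset.sum_filter_of_ne (p := fun j => ε j ≠ 0) fun j _ => right_ne_zero_of_smul]
    exact Finset.sum_subtype _ (fun j => Finset.mem_filter_univ j) fun j => y j • ε j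
  rw [Fintype.sum_option] at hx
  obtain ⟨hnone, hsome⟩ := h (x none) y (hsum ▸ hx)
  rintro (_ | j)
  · exact hnone
  · rw [← hy]
    exact (smul_eq_zero_iff_left j.2).1 (hsome j)

theorem finrank_span_range_add {ι : Type*} [Fintype ι] [DecidableEq E] {w : E} {ε : ι → E}
    (h : ∀ (r : K) (x : ι → K), r • w + ∑ j, x j • ε j = 0 → r = 0 ∧ ∀ j, x j • ε j = 0) :
    finrank K (Submodule.span K (Set.range fun j => w + ε j)) =
      min (Fintype.card ι) (Fintype.card {j // ε j ≠ 0} + 1) := by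
  by_cases hε : ∀ j, ε j ≠ 0
  · have hindep : LinearIndependent K fun j => w + ε j := by
      refine Fintype.linearIndependent_iff.2 fun x hx j => ?_
      have hx' : (∑ j, x j) • w + ∑ j, x j • ε j = 0 := by
        simpa only [Finset.sum_smul, smul_add, Finset.sum_add_distrib] using hx
      exact (smul_eq_zero_iff_left (hε j)).1 ((h _ x hx').2 j)
    rw [finrank_span_eq_card hindep, Fintype.card_congr (Equiv.subtypeUnivEquiv hε)]
    simp
  · push Not at hε
    obtain ⟨i, hi⟩ := hε
    let g : Option {j // ε j ≠ 0} → E := fun o => o.elim w fun j => ε j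
    have hw : w ∈ Submodule.span K (Set.range g) := Submodule.subset_span ⟨none, rfl⟩
    have hw' : w ∈ Submodule.span K (Set.range fun j => w + ε j) :=
      Submodule.subset_span ⟨i, by simp [hi]⟩
    have hspan : Submodule.span K (Set.range fun j => w + ε j) =
        Submodule.span K (Set.range g) := by
      apply le_antisymm <;> refine Submodule.span_le.2 (Set.range_subset_iff.2 ?_)
      · intro j
        refine add_mem hw ?_
        by_cases hj : ε j = 0
        · simp [hj]
        · exact Submodule.subset_span ⟨some ⟨j, hj⟩, rfl⟩
      · rintro (_ | j)
        · exact hw'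
        · simpa [g] using sub_mem (Submodule.subset_span (Set.mem_range_self j.1)) hw'
    rw [hspan, finrank_span_eq_card (linearIndependent_option_elim h), Fintype.card_option]
    have := Fintype.card_subtype_lt (p := fun j => ε j ≠ 0) (x := i) (by simp [hi])
    omega

end Span

section WordForms

open Matrix

/-- The position, among the letters `0, …, 4`, the whole word `5` and the triple `6` of letters
`j, j + 1, j + 2`, of the four terms of a relation. For `r = 1` it is the identity applied to
the letters of the triple, for `r = 0` the identity applied to the word with that triple
bracketed. -/
def relationPosition : Fin 2 → Fin 3 → Fin 4 → Fin 7 :=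
  ![![![5, 6, 3, 4], ![5, 0, 6, 4], ![5, 0, 1, 6]],
    ![![6, 0, 1, 2], ![6, 1, 2, 3], ![6, 2, 3, 4]]]

/-- The columns of the matrix of consequences indexed by two of the letters `0, …, 4` and the
whole word `5`, numbered from zero. -/
def coreColumn : Fin 6 → Fin 6 → Fin 42 :=
  ![![5, 17, 19, 20, 21, 3],
    ![17, 24, 29, 30, 31, 7],
    ![19, 29, 34, 37, 38, 10],
    ![20, 30, 37, 39, 40, 12],
    ![21, 31, 38, 40, 41, 13],
    ![3, 7, 10, 12, 13, 0]]

/-- The columns of the matrix of consequences indexed by the triple starting at a given letter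
and one of the seven positions of `relationPosition`, numbered from zero. -/
def tripleColumn : Fin 3 → Fin 7 → Fin 42 :=
  ![![4, 8, 11, 14, 15, 1, 2],
    ![16, 23, 25, 26, 27, 6, 22],
    ![18, 28, 33, 35, 36, 9, 32]]

/-- The column indexed by two of the seven positions attached to the `j`-th triple. -/
def consColumn (j : Fin 3) : Fin 7 → Fin 7 → Fin 42 :=
  Fin.snoc (fun k => Fin.snoc (coreColumn k) (tripleColumn j k.castSucc)) (tripleColumn j)

/-- The row obtained by pairing the relation `r` of the `j`-th triple with the position `k`. -/
def consRow (r : Fin 2) (j : Fin 3) (k : Fin 7) : Fin 42 :=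
  if k = Fin.last 6 then Fin.ofNat 42 (36 + 3 * r + j) else Fin.ofNat 42 (18 * r + 6 * j + k)

theorem consColumn_comm : ∀ j k l, consColumn j k l = consColumn j l k := by
  decide +kernel

theorem consColumn_castSucc : ∀ j (k l : Fin 6),
    consColumn j k.castSucc l.castSucc = coreColumn k l := by
  decide +kernel

theorem consColumn_surjective : ∀ n, ∃ j k l, consColumn j k l = n := by
  decide +kernel

theorem consRow_surjective : ∀ i, ∃ r j k, consRow r j k = i := by
  decide +kernel

theorem column_consRow : ∀ r j k (s : Fin 4),
    ![colP, colQ, colR, colS] s (consRow r j k) =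
      (consColumn j (relationPosition r j s) k : ℕ) + 1 := by
  decide +kernel

variable {K : Type*} [Field K]

/-- Extension by zero from the core positions to all positions. -/
noncomputable def coreInclusion (K : Type*) [Field K] : (Fin 6 → K) →ₗ[K] (Fin 7 → K) :=
  Function.ExtendByZero.linearMap K Fin.castSucc

theorem coreInclusion_castSucc (x : Fin 6 → K) (k : Fin 6) :
    coreInclusion K x k.castSucc = x k :=
  (Fin.castSucc_injective 6).extend_apply x (0 : Fin 7 → K) k

theorem coreInclusion_last (x : Fin 6 → K) : coreInclusion K x (Fin.last 6) = 0 :=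
  Function.extend_apply' x (0 : Fin 7 → K) _ fun ⟨k, hk⟩ => k.castSucc_ne_last hk

theorem comap_coreInclusion_bot :
    (⊥ : Submodule K (Fin 7 → K)).comap (coreInclusion K) = ⊥ :=
  LinearMap.ker_eq_bot'.2 fun x hx => funext fun k => by
    rw [← coreInclusion_castSucc x, hx, Pi.zero_apply, Pi.zero_apply]

theorem coreInclusion_single (k : Fin 6) :
    coreInclusion K (Pi.single k 1) = Pi.single k.castSucc 1 := by
  ext l
  induction l using Fin.lastCases with
  | last => rw [coreInclusion_last, Pi.single_eq_of_ne k.castSucc_ne_last.symm]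
  | cast l => simp only [coreInclusion_castSucc, Pi.single_apply, Fin.castSucc_inj]

theorem finrank_gluedForms_coreInclusion (U : Fin 3 → Submodule K (Fin 7 → K)) :
    finrank K (gluedForms (coreInclusion K) U) =
      (7 - finrank K (⨆ j, (U j).comap (coreInclusion K) : Submodule K (Fin 6 → K))).choose 2 +
      ∑ j, ((8 - finrank K (U j)).choose 2 -
        (7 - finrank K ((U j).comap (coreInclusion K))).choose 2) := by
  have hdim (W : Submodule K (Fin 6 → K)) :
      finrank K (Fin 6 → K) - finrank K W + 1 = 7 - finrank K W := by
    have := W.finrank_le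
    simp only [finrank_fin_fun] at this ⊢
    omega
  have hdim' (W : Submodule K (Fin 7 → K)) :
      finrank K (Fin 7 → K) - finrank K W + 1 = 8 - finrank K W := by
    have := W.finrank_le
    simp only [finrank_fin_fun] at this ⊢
    omega
  simp only [← hdim, ← hdim']
  exact finrank_gluedForms _ _

/-- The relation `r` of the `j`-th triple, with coefficients `v = (a, b, c, d)`, as a vector on
the positions. -/
def relation (v : Fin 4 → K) (r : Fin 2) (j : Fin 3) : Fin 7 → K :=
  ∑ s, v s • Pi.single (relationPosition r j s) 1

/-- The span of the two relations of the `j`-th triple. -/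
abbrev relationSpan (v : Fin 4 → K) (j : Fin 3) : Submodule K (Fin 7 → K) :=
  Submodule.span K {relation v 0 j, relation v 1 j}

/-- A vector of column values, read as a bilinear form on the positions attached to the `j`-th
triple. -/
noncomputable def columnForm (j : Fin 3) :
    (Fin 42 → K) →ₗ[K] symmForms (⊥ : Submodule K (Fin 7 → K)) :=
  (symmFormsBotEquiv (Pi.basisFun K (Fin 7))).symm.toLinearMap ∘ₗ
    LinearMap.funLeft K K (Sym2.lift ⟨consColumn j, consColumn_comm j⟩)

theorem columnForm_single (j : Fin 3) (f : Fin 42 → K) (k l : Fin 7) :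
    (columnForm j f).1 (Pi.single k 1) (Pi.single l 1) = f (consColumn j k l) := by
  have := symmFormsBotEquiv_symm_basis (Pi.basisFun K (Fin 7))
    (LinearMap.funLeft K K (Sym2.lift ⟨consColumn j, consColumn_comm j⟩) f) k l
  rwa [Pi.basisFun_apply, Pi.basisFun_apply] at this

theorem columnForm_restrict (i j : Fin 3) (f : Fin 42 → K) :
    symmFormsRestrict (coreInclusion K) ⊥ (columnForm i f) =
      symmFormsRestrict (coreInclusion K) ⊥ (columnForm j f) :=
  LinearMap.ext_basis (Pi.basisFun K _) (Pi.basisFun K _) fun k l => by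
    simp only [symmFormsRestrict_apply, Pi.basisFun_apply, coreInclusion_single]
    rw [columnForm_single, columnForm_single, consColumn_castSucc, consColumn_castSucc]

theorem consMatrix_mulVec_consRow (a b c d : K) (f : Fin 42 → K) (r : Fin 2) (j : Fin 3)
    (k : Fin 7) :
    (consMatrix K a b c d *ᵥ f) (consRow r j k) =
      (columnForm j f).1 (relation ![a, b, c, d] r j) (Pi.single k 1) := by
  have hentry (s : Fin 4) (x : K) :
      ∑ n : Fin 42, (if (n : ℕ) + 1 = ![colP, colQ, colR, colS] s (consRow r j k)
        then x else 0) * f n = x * f (consColumn j (relationPosition r j s) k) := by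
    simp only [column_consRow, add_left_inj, Fin.val_inj]
    simp
  simp only [mulVec, dotProduct, consMatrix, add_mul, Finset.sum_add_distrib]
  simp only [relation, Fin.sum_univ_four, map_add, map_smul, LinearMap.add_apply,
    LinearMap.smul_apply, columnForm_single, smul_eq_mul]
  exact congr($(hentry 0 a) + $(hentry 1 b) + $(hentry 2 c) + $(hentry 3 d))

theorem consMatrix_mulVec_eq_zero_iff (a b c d : K) (f : Fin 42 → K) :
    consMatrix K a b c d *ᵥ f = 0 ↔
      ∀ j, ∀ u ∈ relationSpan ![a, b, c, d] j, (columnForm j f).1 u = 0 := by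
  have hspan (j : Fin 3) : (∀ u ∈ relationSpan ![a, b, c, d] j, (columnForm j f).1 u = 0) ↔
      ∀ r, (columnForm j f).1 (relation ![a, b, c, d] r j) = 0 := by
    change relationSpan ![a, b, c, d] j ≤ (columnForm j f).1.ker ↔ _
    simp [Submodule.span_le, Set.insert_subset_iff]
  simp only [hspan]
  constructor
  · intro hf j r
    exact (Pi.basisFun K _).ext fun k => by
      simpa [consMatrix_mulVec_consRow] using congr_fun hf (consRow r j k)
  · intro hf
    ext i
    obtain ⟨r, j, k, rfl⟩ := consRow_surjective i
    simp [consMatrix_mulVec_consRow, hf]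

/-- A vector of column values, read as a family of bilinear forms agreeing on the core. -/
noncomputable def columnForms :
    (Fin 42 → K) →ₗ[K] gluedForms (coreInclusion K) fun _ : Fin 3 => ⊥ :=
  LinearMap.codRestrict _
    ((symmFormsRestrict (coreInclusion K) ⊥ ∘ₗ columnForm 0).prod (LinearMap.pi columnForm))
    fun f j => columnForm_restrict j 0 f

theorem columnForms_bijective : Function.Bijective (columnForms (K := K)) := by
  have hinj : Function.Injective (columnForms (K := K)) := fun f g hfg => by
    ext n
    obtain ⟨j, k, l, rfl⟩ := consColumn_surjective n
    have hj : columnForm j f = columnForm j g := congr(($hfg).1.2 j)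
    rw [← columnForm_single j f, hj, columnForm_single]
  have hfinrank : finrank K (Fin 42 → K) =
      finrank K (gluedForms (coreInclusion K) fun _ : Fin 3 => ⊥) := by
    rw [finrank_gluedForms_coreInclusion, comap_coreInclusion_bot, iSup_const]
    simp [Nat.choose]
  exact ⟨hinj, (LinearMap.injective_iff_surjective_of_finrank_eq_finrank hfinrank).1 hinj⟩

theorem finrank_ker_consMatrix (a b c d : K) :
    finrank K (consMatrix K a b c d).mulVecLin.ker =
      finrank K (gluedForms (coreInclusion K) (relationSpan ![a, b, c, d])) := by
  let e := LinearEquiv.ofBijective columnForms (columnForms_bijective (K := K))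
  let incl := gluedFormsInclusion (coreInclusion K) (relationSpan ![a, b, c, d])
  have hker : (consMatrix K a b c d).mulVecLin.ker = incl.range.comap e.toLinearMap := by
    ext f
    rw [LinearMap.mem_ker, mulVecLin_apply, consMatrix_mulVec_eq_zero_iff, Submodule.mem_comap,
      mem_range_gluedFormsInclusion]
    rfl
  rw [hker, (e.ofSubmodule' incl.range).finrank_eq]
  exact LinearMap.finrank_range_of_inj (gluedFormsInclusion_injective _ _)

theorem relation_zero_last (v : Fin 4 → K) (j : Fin 3) :
    relation v 0 j (Fin.last 6) = v j.succ := by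
  fin_cases j <;> simp +decide [relation, Fin.sum_univ_four, Pi.single_apply]

theorem relation_one_last (v : Fin 4 → K) (j : Fin 3) : relation v 1 j (Fin.last 6) = v 0 := by
  fin_cases j <;> simp +decide [relation, Fin.sum_univ_four, Pi.single_apply]

/-- The part of a relation supported on the core positions. -/
def coreRelation (v : Fin 4 → K) (r : Fin 2) (j : Fin 3) : Fin 6 → K :=
  fun k => relation v r j k.castSucc

theorem coreInclusion_coreRelation {v : Fin 4 → K} {r : Fin 2} {j : Fin 3}
    (h : relation v r j (Fin.last 6) = 0) :
    coreInclusion K (coreRelation v r j) = relation v r j := by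
  ext k
  induction k using Fin.lastCases with
  | last => rw [coreInclusion_last, h]
  | cast k => rw [coreInclusion_castSucc, coreRelation]

theorem coreRelation_zero (v : Fin 4 → K) :
    coreRelation v 0 = ![![0, 0, 0, v 2, v 3, v 0], ![v 1, 0, 0, 0, v 3, v 0],
      ![v 1, v 2, 0, 0, 0, v 0]] := by
  ext j k
  fin_cases j <;> fin_cases k <;>
    simp +decide [coreRelation, relation, Fin.sum_univ_four, Pi.single_apply]

theorem coreRelation_one (v : Fin 4 → K) :
    coreRelation v 1 = ![![v 1, v 2, v 3, 0, 0, 0], ![0, v 1, v 2, v 3, 0, 0],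
      ![0, 0, v 1, v 2, v 3, 0]] := by
  ext j k
  fin_cases j <;> fin_cases k <;>
    simp +decide [coreRelation, relation, Fin.sum_univ_four, Pi.single_apply]

theorem linearIndependent_relation {v : Fin 4 → K} (hv : v ≠ 0) (j : Fin 3) :
    LinearIndependent K ![relation v 0 j, relation v 1 j] := by
  obtain ⟨i, hi⟩ := Function.ne_iff.1 hv
  refine LinearIndependent.pair_iff.2 fun s t hst => ?_
  have hlast : s * v j.succ + t * v 0 = 0 := by
    simpa [-Fin.reduceLast, relation_zero_last, relation_one_last] using congr_fun hst (Fin.last 6)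
  have hcore : s • coreRelation v 0 j + t • coreRelation v 1 j = 0 :=
    funext fun k => congr_fun hst k.castSucc
  rw [coreRelation_zero, coreRelation_one] at hcore
  fin_cases j <;> fin_cases i <;> simp_all

theorem finrank_relationSpan {v : Fin 4 → K} (hv : v ≠ 0) (j : Fin 3) :
    finrank K (relationSpan v j) = 2 := by
  have h := finrank_span_eq_card (linearIndependent_relation hv j)
  rwa [Matrix.range_cons_cons_empty, Fintype.card_fin] at h

/-- The combination of the two relations of the `j`-th triple from which the bracketed triple is
eliminated. -/
def eliminatedRelation (v : Fin 4 → K) (j : Fin 3) : Fin 6 → K :=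
  v 0 • coreRelation v 0 j - v j.succ • coreRelation v 1 j

theorem coreInclusion_eliminatedRelation (v : Fin 4 → K) (j : Fin 3) :
    coreInclusion K (eliminatedRelation v j) =
      v 0 • relation v 0 j - v j.succ • relation v 1 j := by
  ext k
  induction k using Fin.lastCases with
  | last =>
    simp [-Fin.reduceLast, coreInclusion_last, relation_zero_last, relation_one_last, mul_comm]
  | cast k => simp [coreInclusion_castSucc, eliminatedRelation, coreRelation]

theorem coreInclusion_injective : Function.Injective (coreInclusion K) :=
  LinearMap.ker_eq_bot.1 comap_coreInclusion_bot

theorem comap_relationSpan_of_ne_zero {v : Fin 4 → K} {j : Fin 3} (h : v 0 ≠ 0 ∨ v j.succ ≠ 0) :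
    (relationSpan v j).comap (coreInclusion K) = Submodule.span K {eliminatedRelation v j} := by
  rw [← relation_zero_last v j, ← relation_one_last v j] at h
  refine comap_span_pair_eq_span_singleton coreInclusion_injective
    (φ := LinearMap.proj (Fin.last 6)) coreInclusion_last ?_ h.symm
  rw [coreInclusion_eliminatedRelation]
  simp only [LinearMap.proj_apply, relation_zero_last, relation_one_last]

theorem comap_relationSpan_of_eq_zero {v : Fin 4 → K} {j : Fin 3} (h0 : v 0 = 0)
    (hj : v j.succ = 0) : (relationSpan v j).comap (coreInclusion K) =
      Submodule.span K {coreRelation v 0 j, coreRelation v 1 j} := by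
  rw [relationSpan, ← coreInclusion_coreRelation (by rw [relation_zero_last, hj]),
    ← coreInclusion_coreRelation (by rw [relation_one_last, h0]), ← Set.image_pair,
    Submodule.span_image, Submodule.comap_map_eq_of_injective coreInclusion_injective]

theorem finrank_comap_relationSpan [DecidableEq K] {v : Fin 4 → K} (hv : v ≠ 0) (j : Fin 3) :
    finrank K ((relationSpan v j).comap (coreInclusion K)) =
      if v 0 = 0 ∧ v j.succ = 0 then 2 else 1 := by
  have hrel := linearIndependent_relation hv j
  split_ifs with h
  · have hcore : LinearIndependent K ![coreRelation v 0 j, coreRelation v 1 j] :=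
      LinearIndependent.pair_iff.2 fun s t hst => LinearIndependent.pair_iff.1 hrel s t <| by
        rw [← coreInclusion_coreRelation (by rw [relation_zero_last, h.2]),
          ← coreInclusion_coreRelation (by rw [relation_one_last, h.1]), ← map_smul, ← map_smul,
          ← map_add, hst, map_zero]
    rw [comap_relationSpan_of_eq_zero h.1 h.2, ← Matrix.range_cons_cons_empty _ _ ![],
      finrank_span_eq_card hcore, Fintype.card_fin]
  · rw [comap_relationSpan_of_ne_zero (by tauto)]
    refine finrank_span_singleton fun hzero => h ?_
    have := coreInclusion_eliminatedRelation v j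
    rw [hzero, map_zero, sub_eq_add_neg, ← neg_smul, eq_comm] at this
    simpa using LinearIndependent.pair_iff.1 hrel _ _ this

/-- The span of the relations that the three triples impose on the core positions, that is, of
the combinations of their two relations that do not involve the bracketed triple. -/
noncomputable abbrev coreRelationSpan (v : Fin 4 → K) : Submodule K (Fin 6 → K) :=
  ⨆ j, (relationSpan v j).comap (coreInclusion K)

theorem linearIndependent_coreRelation_one {v : Fin 4 → K} {i : Fin 3} (hi : v i.succ ≠ 0) :
    LinearIndependent K (coreRelation v 1) := by
  refine Fintype.linearIndependent_iff.2 fun x hx => ?_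
  rw [coreRelation_one, Fin.sum_univ_three] at hx
  obtain ⟨h0, h1, h2, h3, h4⟩ : x 0 * v 1 = 0 ∧ x 0 * v 2 + x 1 * v 1 = 0 ∧
      x 0 * v 3 + x 1 * v 2 + x 2 * v 1 = 0 ∧ x 1 * v 3 + x 2 * v 2 = 0 ∧ x 2 * v 3 = 0 := by
    simpa [Fin.forall_fin_succ] using congr_fun hx
  have hi' : v 1 ≠ 0 ∨ v 2 ≠ 0 ∨ v 3 ≠ 0 := by fin_cases i <;> simp_all
  simp only [Fin.forall_fin_succ, Fin.forall_fin_zero, and_true]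
  grind

theorem coreRelationSpan_le_iff {v : Fin 4 → K} (h0 : v 0 = 0) (P : Submodule K (Fin 6 → K)) :
    coreRelationSpan v ≤ P ↔
      ∀ j, coreRelation v 1 j ∈ P ∧ (v j.succ = 0 → coreRelation v 0 j ∈ P) := by
  refine iSup_le_iff.trans (forall_congr' fun j => ?_)
  by_cases hj : v j.succ = 0
  · simp [comap_relationSpan_of_eq_zero h0 hj, Submodule.span_le, Set.insert_subset_iff, hj,
      and_comm]
  · rw [comap_relationSpan_of_ne_zero (Or.inr hj), Submodule.span_singleton_le_iff_mem,
      eliminatedRelation, h0, zero_smul, zero_sub, neg_mem_iff, P.smul_mem_iff hj]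
    simp [hj]

theorem finrank_coreRelationSpan_of_add_ne_zero {v : Fin 4 → K} (h0 : v 0 = 0) (h1 : v 1 ≠ 0)
    (h2 : v 2 = 0) (h3 : v 3 ≠ 0) (h13 : v 1 + v 3 ≠ 0) : finrank K (coreRelationSpan v) = 4 := by
  have hle := coreRelationSpan_le_iff h0
  have hmem := (hle _).1 le_rfl
  let g : Fin 4 → Fin 6 → K := Fin.snoc (coreRelation v 1) (coreRelation v 0 1)
  have hspan : coreRelationSpan v = Submodule.span K (Set.range g) := by
    apply le_antisymm
    · refine (hle _).2 fun j => ⟨Submodule.subset_span ⟨j.castSucc, ?_⟩, fun hj => ?_⟩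
      · simp [g]
      · obtain rfl : j = 1 := by fin_cases j <;> simp_all
        exact Submodule.subset_span ⟨Fin.last 3, Fin.snoc_last ..⟩
    · refine Submodule.span_le.2 (Set.range_subset_iff.2 fun j => ?_)
      induction j using Fin.lastCases with
      | last => simpa [g, -Fin.reduceLast] using (hmem 1).2 h2
      | cast j => simpa [g] using (hmem j).1
  have hindep : LinearIndependent K g := by
    refine Fintype.linearIndependent_iff.2 fun x hx => ?_
    rw [Fin.sum_univ_castSucc] at hx
    simp only [g, Fin.snoc_castSucc, Fin.snoc_last, coreRelation_zero, coreRelation_one,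
      Fin.sum_univ_three] at hx
    obtain ⟨e0, e1, e2, -, e4⟩ : x 0 * v 1 + x 3 * v 1 = 0 ∧ x 1 * v 1 = 0 ∧
        x 0 * v 3 + x 2 * v 1 = 0 ∧ x 1 * v 3 = 0 ∧ x 2 * v 3 + x 3 * v 3 = 0 := by
      simpa [Fin.forall_fin_succ, h0, h2] using congr_fun hx
    simp only [Fin.forall_fin_succ, Fin.forall_fin_zero, and_true]
    grind
  rw [hspan, finrank_span_eq_card hindep, Fintype.card_fin]

theorem coreRelationSpan_eq_span_range {v : Fin 4 → K} (h0 : v 0 = 0)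
    (h2 : v 2 = 0 → v 1 = 0 ∨ v 3 = 0 ∨ v 1 + v 3 = 0) :
    coreRelationSpan v = Submodule.span K (Set.range (coreRelation v 1)) := by
  have hone (j) := Submodule.subset_span (R := K) (Set.mem_range_self (f := coreRelation v 1) j)
  have hle := coreRelationSpan_le_iff h0
  refine le_antisymm ((hle _).2 fun j => ⟨hone j, fun hj => ?_⟩) <|
    Submodule.span_le.2 (Set.range_subset_iff.2 fun j => ((hle _).1 le_rfl j).1)
  fin_cases j
  · convert hone 2 using 1
    simp_all [coreRelation_zero, coreRelation_one]
  · obtain h1 | h3 | h13 := h2 hj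
    · convert hone 2 using 1
      simp_all [coreRelation_zero, coreRelation_one]
    · convert hone 0 using 1
      simp_all [coreRelation_zero, coreRelation_one]
    · convert add_mem (hone 0) (hone 2) using 1
      simp_all [coreRelation_zero, coreRelation_one, add_comm]
  · convert hone 0 using 1
    simp_all [coreRelation_zero, coreRelation_one]

theorem finrank_coreRelationSpan_of_eq_zero [DecidableEq K] {v : Fin 4 → K} (hv : v ≠ 0)
    (h0 : v 0 = 0) : finrank K (coreRelationSpan v) =
      if v 1 ≠ 0 ∧ v 2 = 0 ∧ v 3 ≠ 0 ∧ v 1 + v 3 ≠ 0 then 4 else 3 := by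
  split_ifs with h
  · obtain ⟨h1, h2, h3, h13⟩ := h
    exact finrank_coreRelationSpan_of_add_ne_zero h0 h1 h2 h3 h13
  · obtain ⟨i, hi⟩ := Function.ne_iff.1 hv
    obtain ⟨i, rfl⟩ := Fin.exists_succ_eq_of_ne_zero (show i ≠ 0 by rintro rfl; exact hi h0)
    rw [coreRelationSpan_eq_span_range h0 (by tauto),
      finrank_span_eq_card (linearIndependent_coreRelation_one hi), Fintype.card_fin]

/-- The part of the eliminated relations that depends on the triple, see
`exists_eliminatedRelation_eq`. -/
def discrepancy {R : Type*} [CommRing R] (v : Fin 4 → R) : Fin 3 → Fin 6 → R :=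
  ![![-(v 1 * (v 0 + v 1)), 0, 0, v 2 * (v 0 + v 3), 0, 0],
    ![0, 0, v 1 * v 3 - v 2 ^ 2, 0, 0, 0],
    ![0, v 2 * (v 0 + v 1), 0, 0, -(v 3 * (v 0 + v 3)), 0]]

theorem exists_eliminatedRelation_eq (v : Fin 4 → K) :
    ∃ w : Fin 6 → K, w 5 = v 0 ^ 2 ∧ eliminatedRelation v = fun j => w + discrepancy v j := by
  refine ⟨![v 0 * v 1, -(v 1 * v 2), -(v 1 * v 3), -(v 2 * v 3), v 0 * v 3, v 0 ^ 2], rfl, ?_⟩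
  ext j k
  rw [eliminatedRelation, coreRelation_zero, coreRelation_one, discrepancy]
  fin_cases j <;> fin_cases k <;> simp <;> ring

theorem finrank_coreRelationSpan_of_ne_zero [DecidableEq K] {v : Fin 4 → K} (h0 : v 0 ≠ 0) :
    finrank K (coreRelationSpan v) = min 3 (Fintype.card {j // discrepancy v j ≠ 0} + 1) := by
  obtain ⟨w, hw, helim⟩ := exists_eliminatedRelation_eq v
  have hspan : coreRelationSpan v =
      Submodule.span K (Set.range fun j => w + discrepancy v j) := by
    rw [← helim, coreRelationSpan, Submodule.span_range_eq_iSup]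
    exact iSup_congr fun j => comap_relationSpan_of_ne_zero (Or.inl h0)
  rw [hspan, finrank_span_range_add, Fintype.card_fin]
  intro r x hx
  have hr : r = 0 := by
    have h5 := congr_fun hx 5
    simpa [hw, discrepancy, Fin.sum_univ_three, h0] using h5
  obtain ⟨e0, e1, e2, e3, e4⟩ : x 0 * (v 1 * (v 0 + v 1)) = 0 ∧ x 2 * (v 2 * (v 0 + v 1)) = 0 ∧
      x 1 * (v 1 * v 3 - v 2 ^ 2) = 0 ∧ x 0 * (v 2 * (v 0 + v 3)) = 0 ∧
      x 2 * (v 3 * (v 0 + v 3)) = 0 := by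
    rw [hr, zero_smul, zero_add] at hx
    simpa [discrepancy, Fin.sum_univ_three, Fin.forall_fin_succ] using congr_fun hx
  refine ⟨hr, fun j => funext fun k => ?_⟩
  fin_cases j <;> fin_cases k <;> simp [discrepancy, -mul_eq_zero, e0, e1, e2, e3, e4]

/-- The dimension of `coreRelationSpan v`, in closed form. -/
def coreRank {R : Type*} [CommRing R] [DecidableEq R] (v : Fin 4 → R) : ℕ :=
  if v 0 = 0 then
    if v 1 ≠ 0 ∧ v 2 = 0 ∧ v 3 ≠ 0 ∧ v 1 + v 3 ≠ 0 then 4 else 3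
  else min 3 (Fintype.card {j // discrepancy v j ≠ 0} + 1)

theorem finrank_coreRelationSpan [DecidableEq K] {v : Fin 4 → K} (hv : v ≠ 0) :
    finrank K (coreRelationSpan v) = coreRank v := by
  rw [coreRank]
  split_ifs with h0 h
  · rw [finrank_coreRelationSpan_of_eq_zero hv h0, if_pos h]
  · rw [finrank_coreRelationSpan_of_eq_zero hv h0, if_neg h]
  · exact finrank_coreRelationSpan_of_ne_zero h0

/-- The rank of the matrix of consequences with coefficients `v = (a, b, c, d)`, in closed form. -/
def consRank {R : Type*} [CommRing R] [DecidableEq R] (v : Fin 4 → R) : ℕ :=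
  42 - ((7 - coreRank v).choose 2 + 5 * Fintype.card {j : Fin 3 // v 0 = 0 ∧ v j.succ = 0})

theorem finrank_gluedForms_relationSpan [DecidableEq K] {v : Fin 4 → K} (hv : v ≠ 0) :
    finrank K (gluedForms (coreInclusion K) (relationSpan v)) =
      (7 - coreRank v).choose 2 + 5 * Fintype.card {j : Fin 3 // v 0 = 0 ∧ v j.succ = 0} := by
  have hterm (j : Fin 3) : (8 - finrank K (relationSpan v j)).choose 2 -
      (7 - finrank K ((relationSpan v j).comap (coreInclusion K))).choose 2 =
      if v 0 = 0 ∧ v j.succ = 0 then 5 else 0 := by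
    rw [finrank_relationSpan hv, finrank_comap_relationSpan hv]
    split_ifs <;> rfl
  rw [finrank_gluedForms_coreInclusion, finrank_coreRelationSpan hv,
    Finset.sum_congr rfl fun j _ => hterm j, ← Finset.sum_filter, Finset.sum_const,
    Fintype.card_subtype, smul_eq_mul, mul_comm 5]

end WordForms

theorem stmt_1_general {K : Type*} [Field K] [DecidableEq K] (a b c d : K)
    (hne : (a, b, c, d) ≠ (0, 0, 0, 0)) :
    (consMatrix K a b c d).rank = consRank ![a, b, c, d] := by
  have hv : ![a, b, c, d] ≠ 0 := by simpa using hne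
  have hker := finrank_ker_consMatrix a b c d
  rw [finrank_gluedForms_relationSpan hv] at hker
  have hrank := (consMatrix K a b c d).mulVecLin.finrank_range_add_finrank_ker
  rw [finrank_fin_fun, hker] at hrank
  exact Nat.eq_sub_of_add_eq hrank

theorem discrepancy_comp {R S : Type*} [CommRing R] [CommRing S] (f : R →+* S) (v : Fin 4 → R)
    (j : Fin 3) : discrepancy (f ∘ v) j = f ∘ discrepancy v j := by
  ext k
  fin_cases j <;> fin_cases k <;> simp [discrepancy]

theorem consRank_comp {R S : Type*} [CommRing R] [DecidableEq R] [CommRing S] [DecidableEq S]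
    {f : R →+* S} (hf : Function.Injective f) (v : Fin 4 → R) :
    consRank (f ∘ v) = consRank v := by
  have hzero (x : R) : f x = 0 ↔ x = 0 := map_eq_zero_iff f hf
  have hdisc (j : Fin 3) : discrepancy (f ∘ v) j ≠ 0 ↔ discrepancy v j ≠ 0 := by
    rw [discrepancy_comp, Ne, ← map_comp_zero f, hf.comp_left.eq_iff]
  have hcard := Fintype.card_congr (Equiv.subtypeEquivRight hdisc)
  simp only [consRank, coreRank, hcard, Function.comp_apply, ← map_add, hzero, ne_eq]

set_option synthInstance.maxSize 256 in
theorem consRank_submaxTable :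
    ∀ a ∈ ({0, 1, -1, 2, -2} : Finset ℤ), ∀ b ∈ ({0, 1, -1, 2, -2} : Finset ℤ),
    ∀ c ∈ ({0, 1, -1, 2, -2} : Finset ℤ), ∀ d ∈ ({0, 1, -1, 2, -2} : Finset ℤ),
      (0 < a ∨ (a = 0 ∧ 0 < b) ∨ (a = 0 ∧ b = 0 ∧ 0 < c) ∨
        (a = 0 ∧ b = 0 ∧ c = 0 ∧ 0 < d)) →
      Int.gcd a (Int.gcd b (Int.gcd c d)) = 1 →
      (consRank ![a, b, c, d] < 36 ↔ ∃ pr ∈ submaxTable, (a, b, c, d) = pr.1) ∧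
      (∀ pr ∈ submaxTable, (a, b, c, d) = pr.1 → consRank ![a, b, c, d] = pr.2) ∧
      ((∀ pr ∈ submaxTable, (a, b, c, d) ≠ pr.1) → consRank ![a, b, c, d] = 36) := by
  decide +kernel

theorem rank_consMatrix_intCast (K : Type*) [Field K] [CharZero K] {a b c d : ℤ}
    (hne : (a, b, c, d) ≠ (0, 0, 0, 0)) :
    (consMatrix K a b c d).rank = consRank ![a, b, c, d] := by
  classical
  rw [stmt_1_general _ _ _ _ (by simpa using hne),
    ← consRank_comp (RingHom.injective_int (Int.castRingHom K))]
  congr 1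
  ext i
  fin_cases i <;> rfl

/-- For a nonzero integer vector `v = (a,b,c,d)` with components in `{0, 1, -1, 2, -2}`,
first nonzero component positive and with gcd of the components equal to 1:
the rank of `M(v)` over `ℚ` is `< 36` iff `v` occurs in the table of 41 vectors, in which
case the rank is the tabulated value; for all other such `v` the rank equals 36. -/
theorem stmt_1 (a b c d : ℤ)
    (hne : (a, b, c, d) ≠ (0, 0, 0, 0))
    (ha : a ∈ ({0, 1, -1, 2, -2} : Set ℤ))
    (hb : b ∈ ({0, 1, -1, 2, -2} : Set ℤ))
    (hc : c ∈ ({0, 1, -1, 2, -2} : Set ℤ))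
    (hd : d ∈ ({0, 1, -1, 2, -2} : Set ℤ))
    (hpos : 0 < a ∨ (a = 0 ∧ 0 < b) ∨ (a = 0 ∧ b = 0 ∧ 0 < c) ∨
      (a = 0 ∧ b = 0 ∧ c = 0 ∧ 0 < d))
    (hgcd : Int.gcd a (Int.gcd b (Int.gcd c d)) = 1) :
    ((consMatrix ℚ (a : ℚ) (b : ℚ) (c : ℚ) (d : ℚ)).rank < 36 ↔
      ∃ pr ∈ submaxTable, (a, b, c, d) = pr.1) ∧
    (∀ pr ∈ submaxTable, (a, b, c, d) = pr.1 →
      (consMatrix ℚ (a : ℚ) (b : ℚ) (c : ℚ) (d : ℚ)).rank = pr.2) ∧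
    ((∀ pr ∈ submaxTable, (a, b, c, d) ≠ pr.1) →
      (consMatrix ℚ (a : ℚ) (b : ℚ) (c : ℚ) (d : ℚ)).rank = 36) := by
  simp only [rank_consMatrix_intCast ℚ hne]
  exact consRank_submaxTable a (by simpa using ha) b (by simpa using hb) c (by simpa using hc)
    d (by simpa using hd) hpos hgcd
end

section
/- Let K be the field of fractions of the polynomial ring ℚ[a,b,c,d] in four indeterminates a, b, c, d. Then the matrix of consequences M(a,b,c,d), viewed as a matrix over K with the four indeterminates as parameters, has rank exactly 36. -/
/-!
Columns are the products `L_I L_J` of two copies of `L`, each acting on an odd-length factor of an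
associative word `x₁x₂x₃x₄x₅`, the two factors being nested or disjoint. Rows are the six instances
of the identity, linear in the `L_I`, each multiplied by one further `L_J`. So a vector in the
kernel is a symmetric function `v(I, J)` of two factors which, as a function of `I`, satisfies the
linear identities. Let `V` be the solution space of these identities on single factors.
If `V` has coordinates given by the values at `n` letters and `a ≠ 0`, then the values at pairs of
these letters identify the kernel with the symmetric `n × n` matrices: the crossing pairs, for which
no column exists, consist of two distinct triples and are never needed, and the identity on a
triple expresses `v` at that triple, taken twice, through pairs containing a letter.
When `a`, `b`, `c`, `a + b` are nonzero, `n = 3` and the kernel has dimension `6`.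
-/

/-- The factors of odd length of the word `x₁x₂x₃x₄x₅`; `triple i` is the factor of length three
starting at `letter i`. -/
inductive OddFactor
  | letter (i : Fin 5)
  | triple (i : Fin 3)
  | word
  deriving DecidableEq, Fintype

open OddFactor

/-- The six splittings `P = A · B · C` of an odd factor into three odd factors, each listed
as `![P, A, B, C]`. -/
def factorSplit : Fin 6 → Fin 4 → OddFactor :=
  ![![word, triple 0, letter 3, letter 4],
    ![word, letter 0, triple 1, letter 4],
    ![word, letter 0, letter 1, triple 2],
    ![triple 0, letter 0, letter 1, letter 2],
    ![triple 1, letter 1, letter 2, letter 3],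
    ![triple 2, letter 2, letter 3, letter 4]]

/-- The pair of factors on which the two copies of `L` act in the monomial labelling a column. -/
def columnPair : Fin 42 → Sym2 OddFactor :=
  ![s(word, word), s(word, triple 0), s(triple 0, triple 0), s(word, letter 0),
    s(triple 0, letter 0), s(letter 0, letter 0), s(word, triple 1), s(word, letter 1),
    s(triple 0, letter 1), s(word, triple 2), s(word, letter 2), s(triple 0, letter 2),
    s(word, letter 3), s(word, letter 4), s(triple 0, letter 3), s(triple 0, letter 4),
    s(triple 1, letter 0), s(letter 0, letter 1), s(triple 2, letter 0), s(letter 0, letter 2),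
    s(letter 0, letter 3), s(letter 0, letter 4), s(triple 1, triple 1), s(triple 1, letter 1),
    s(letter 1, letter 1), s(triple 1, letter 2), s(triple 1, letter 3), s(triple 1, letter 4),
    s(triple 2, letter 1), s(letter 1, letter 2), s(letter 1, letter 3), s(letter 1, letter 4),
    s(triple 2, triple 2), s(triple 2, letter 2), s(letter 2, letter 2), s(triple 2, letter 3),
    s(triple 2, letter 4), s(letter 2, letter 3), s(letter 2, letter 4), s(letter 3, letter 3),
    s(letter 3, letter 4), s(letter 4, letter 4)]

/-- The column labelled by a pair of factors, with an arbitrary value if the two factors cross. -/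
noncomputable def column : Sym2 OddFactor → Fin 42 :=
  Function.invFun columnPair

/-- The splitting whose instance of the operator identity gives a row. -/
def rowSplit (i : Fin 42) : Fin 6 :=
  ⟨if (i : ℕ) < 36 then i / 6 else i - 36, by grind⟩

/-- The factor on which the additional `L` acts in the consequence giving a row. -/
def rowMultiplier (i : Fin 42) : OddFactor :=
  if (i : ℕ) < 36 then
    ![letter 0, letter 1, letter 2, letter 3, letter 4, word] (Fin.ofNat 6 i)
  else triple (Fin.ofNat 3 i)

theorem columnPair_injective : Function.Injective columnPair := by
  decide +kernel

theorem column_columnPair (j : Fin 42) : column (columnPair j) = j :=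
  Function.leftInverse_invFun columnPair_injective j

theorem exists_columnPair_eq (j : Fin 42) :
    (∃ I J, (∀ i, J ≠ triple i) ∧ columnPair j = s(I, J)) ∨
      ∃ i, columnPair j = s(triple i, triple i) := by
  decide +kernel +revert

theorem exists_row_of_ne_triple (T : Fin 6) (J : OddFactor) (hJ : ∀ i, J ≠ triple i) :
    ∃ i, rowSplit i = T ∧ rowMultiplier i = J := by
  decide +kernel +revert

theorem exists_row_of_triple (m : Fin 3) :
    ∃ i, rowMultiplier i = triple m ∧ factorSplit (rowSplit i) 0 = triple m ∧
      ∀ k ≠ 0, ∀ n, factorSplit (rowSplit i) k ≠ triple n := by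
  decide +kernel +revert

theorem exists_columnPair_eq_row (i : Fin 42) (k : Fin 4) :
    ∃ j : Fin 42, columnPair j = s(factorSplit (rowSplit i) k, rowMultiplier i) ∧
      ![colP i, colQ i, colR i, colS i] k = j + 1 := by
  decide +kernel +revert

theorem exists_columnPair_eq_letters (i j : Fin 5) :
    ∃ n, columnPair n = s(letter i, letter j) := by
  decide +kernel +revert

theorem cols_eq_column_add_one (i : Fin 42) (k : Fin 4) :
    ![colP i, colQ i, colR i, colS i] k =
      column s(factorSplit (rowSplit i) k, rowMultiplier i) + 1 := by
  obtain ⟨j, hj, hcol⟩ := exists_columnPair_eq_row i k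
  rw [hcol, ← hj, column_columnPair]

theorem columnPair_column_row (i : Fin 42) (k : Fin 4) :
    columnPair (column s(factorSplit (rowSplit i) k, rowMultiplier i)) =
      s(factorSplit (rowSplit i) k, rowMultiplier i) :=
  Function.invFun_eq ((exists_columnPair_eq_row i k).imp fun _ ↦ And.left)

theorem columnPair_column_letters (i j : Fin 5) :
    columnPair (column s(letter i, letter j)) = s(letter i, letter j) :=
  Function.invFun_eq (exists_columnPair_eq_letters i j)

section Kernel

variable {K : Type*} [Field K] {a b c d : K}

/-- The values of `a·L(xyz) + b·L(x)yz + c·xL(y)z + d·xyL(z)` on the six splittings of odd factors,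
where `f I` stands for the word with `L` applied to its factor `I`. -/
def operatorIdentity (a b c d : K) : (OddFactor → K) →ₗ[K] (Fin 6 → K) where
  toFun f T := a * f (factorSplit T 0) + b * f (factorSplit T 1) +
    c * f (factorSplit T 2) + d * f (factorSplit T 3)
  map_add' f g := by ext T; simp only [Pi.add_apply]; ring
  map_smul' r f := by
    ext T; simp only [Pi.smul_apply, smul_eq_mul, RingHom.id_apply]; ring

theorem operatorIdentity_apply (f : OddFactor → K) (T : Fin 6) :
    operatorIdentity a b c d f T = a * f (factorSplit T 0) + b * f (factorSplit T 1) +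
      c * f (factorSplit T 2) + d * f (factorSplit T 3) :=
  rfl

theorem consMatrix_mulVec_apply_s2 (v : Fin 42 → K) (i : Fin 42) :
    (consMatrix K a b c d).mulVec v i =
      operatorIdentity a b c d (fun I ↦ v (column s(I, rowMultiplier i))) (rowSplit i) := by
  have hP : colP i = _ := cols_eq_column_add_one i 0
  have hQ : colQ i = _ := cols_eq_column_add_one i 1
  have hR : colR i = _ := cols_eq_column_add_one i 2
  have hS : colS i = _ := cols_eq_column_add_one i 3
  simp [Matrix.mulVec, dotProduct, consMatrix, operatorIdentity_apply, hP, hQ, hR, hS, add_mul,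
    Finset.sum_add_distrib, Fin.val_inj]

theorem slice_mem_ker_operatorIdentity {v : Fin 42 → K}
    (hv : v ∈ (consMatrix K a b c d).mulVecLin.ker) {J : OddFactor} (hJ : ∀ i, J ≠ triple i) :
    (fun I ↦ v (column s(I, J))) ∈ (operatorIdentity a b c d).ker := by
  ext T
  obtain ⟨i, rfl, rfl⟩ := exists_row_of_ne_triple T J hJ
  rw [← consMatrix_mulVec_apply_s2]
  exact congrFun hv i

theorem comp_columnPair_mem_ker {g : Sym2 OddFactor → K}
    (hg : ∀ J, (fun I ↦ g s(I, J)) ∈ (operatorIdentity a b c d).ker) :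
    g ∘ columnPair ∈ (consMatrix K a b c d).mulVecLin.ker := by
  ext i
  have hgi : operatorIdentity a b c d (fun I ↦ g s(I, rowMultiplier i)) (rowSplit i) = 0 :=
    congrFun (hg (rowMultiplier i)) (rowSplit i)
  rw [Matrix.mulVecLin_apply, consMatrix_mulVec_apply_s2]
  simpa only [operatorIdentity_apply, Function.comp_apply, columnPair_column_row,
    LinearMap.mem_ker, Pi.zero_apply] using hgi

theorem eq_zero_of_column_eq_zero (ha : a ≠ 0) {v : Fin 42 → K}
    (hv : v ∈ (consMatrix K a b c d).mulVecLin.ker)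
    (hzero : ∀ I J, (∀ i, J ≠ triple i) → v (column s(I, J)) = 0) : v = 0 := by
  ext j
  rw [← column_columnPair j]
  obtain ⟨I, J, hJ, hj⟩ | ⟨m, hj⟩ := exists_columnPair_eq j <;> rw [hj]
  · exact hzero I J hJ
  · obtain ⟨i, hmul, hprod, hparts⟩ := exists_row_of_triple m
    have hrow : (consMatrix K a b c d).mulVec v i = 0 := congrFun hv i
    have hpart (k : Fin 4) (hk : k ≠ 0) :
        v (column s(factorSplit (rowSplit i) k, triple m)) = 0 := by
      rw [Sym2.eq_swap]
      exact hzero _ _ (hparts k hk)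
    simpa [consMatrix_mulVec_apply_s2, operatorIdentity_apply, hmul, hprod, hpart, ha] using hrow

section Evaluation

variable {ι : Type*}

/-- Evaluation of the solutions of the operator identities at the letters `e k`. -/
def evalLetters (a b c d : K) (e : ι → Fin 5) :
    (operatorIdentity a b c d).ker →ₗ[K] (ι → K) :=
  (LinearMap.funLeft K K (letter ∘ e)).domRestrict _

/-- Evaluation of the kernel vectors of the matrix of consequences at the columns labelled by
pairs of the letters `e k`. -/
noncomputable def evalLetterPairs (a b c d : K) (e : ι → Fin 5) :
    (consMatrix K a b c d).mulVecLin.ker →ₗ[K] (Sym2 ι → K) :=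
  (LinearMap.funLeft K K fun z ↦ column (z.map (letter ∘ e))).domRestrict _

variable {e : ι → Fin 5}

theorem evalLetterPairs_injective (ha : a ≠ 0)
    (he : Function.Injective (evalLetters a b c d e)) :
    Function.Injective (evalLetterPairs a b c d e) := by
  have eq_zero {f : OddFactor → K} (hf : f ∈ (operatorIdentity a b c d).ker)
      (hfe : ∀ k, f (letter (e k)) = 0) (I : OddFactor) : f I = 0 :=
    congrFun (congrArg Subtype.val ((injective_iff_map_eq_zero _).1 he ⟨f, hf⟩ (funext hfe))) I
  rw [injective_iff_map_eq_zero]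
  rintro ⟨v, hv⟩ hve
  have hnodes (k l : ι) : v (column s(letter (e k), letter (e l))) = 0 := congrFun hve s(k, l)
  have hletter (l : ι) (I : OddFactor) : v (column s(I, letter (e l))) = 0 :=
    eq_zero (slice_mem_ker_operatorIdentity hv (by simp)) (hnodes · l) I
  refine Subtype.ext (eq_zero_of_column_eq_zero ha hv fun I J hJ ↦ ?_)
  refine eq_zero (slice_mem_ker_operatorIdentity hv hJ) (fun k ↦ ?_) I
  rw [Sym2.eq_swap]
  exact hletter k J

/-- The function `∑ k l, β s(k, l) • (t k ⊗ t l)` on pairs, for a symmetric matrix `β`. -/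
def symmetricCombination [Fintype ι] (β : Sym2 ι → K) (t : ι → OddFactor → K) :
    Sym2 OddFactor → K :=
  Sym2.lift ⟨fun I J ↦ ∑ k, ∑ l, β s(k, l) * t l J * t k I, fun I J ↦ by
    refine Finset.sum_comm.trans (Finset.sum_congr rfl fun l _ ↦ Finset.sum_congr rfl fun k _ ↦ ?_)
    rw [Sym2.eq_swap, mul_right_comm]⟩

theorem symmetricCombination_mem_ker [Fintype ι] (β : Sym2 ι → K) {t : ι → OddFactor → K}
    (ht : ∀ k, t k ∈ (operatorIdentity a b c d).ker) (J : OddFactor) :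
    (fun I ↦ symmetricCombination β t s(I, J)) ∈ (operatorIdentity a b c d).ker := by
  have hsum : (fun I ↦ symmetricCombination β t s(I, J)) =
      ∑ k, ∑ l, (β s(k, l) * t l J) • t k := by
    ext I
    simp [symmetricCombination]
  rw [hsum]
  exact sum_mem fun k _ ↦ sum_mem fun l _ ↦ Submodule.smul_mem _ _ (ht k)

theorem evalLetterPairs_surjective [Finite ι]
    (he : Function.Surjective (evalLetters a b c d e)) :
    Function.Surjective (evalLetterPairs a b c d e) := by
  classical
  cases nonempty_fintype ι
  intro β
  choose t ht using fun k : ι ↦ he (Pi.single k 1)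
  have ht_node (k l : ι) : (t k).1 (letter (e l)) = (Pi.single k 1 : ι → K) l :=
    congrFun (ht k) l
  let g := symmetricCombination β fun k ↦ (t k).1
  refine ⟨⟨g ∘ columnPair, comp_columnPair_mem_ker
    (symmetricCombination_mem_ker β fun k ↦ (t k).2)⟩, ?_⟩
  ext z
  induction z with | _ k l
  calc g (columnPair (column s(letter (e k), letter (e l))))
      = g s(letter (e k), letter (e l)) := by rw [columnPair_column_letters]
    _ = β s(k, l) := by simp [g, symmetricCombination, ht_node, Pi.single_apply]

theorem rank_consMatrix_add_choose [Fintype ι] (ha : a ≠ 0)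
    (he : Function.Bijective (evalLetters a b c d e)) :
    (consMatrix K a b c d).rank + (Fintype.card ι + 1).choose 2 = 42 := by
  classical
  have hker : Module.finrank K (consMatrix K a b c d).mulVecLin.ker =
      (Fintype.card ι + 1).choose 2 := by
    rw [(LinearEquiv.ofBijective _ ⟨evalLetterPairs_injective ha he.1,
      evalLetterPairs_surjective he.2⟩).finrank_eq, Module.finrank_fintype_fun_eq_card, Sym2.card]
  rw [← hker]
  simpa [Matrix.rank] using (consMatrix K a b c d).mulVecLin.finrank_range_add_finrank_ker

end Evaluation

theorem evalLetters_injective (ha : a ≠ 0) (hb : b ≠ 0) (hc : c ≠ 0) (hab : a + b ≠ 0) :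
    Function.Injective (evalLetters a b c d ![2, 3, 4]) := by
  rw [injective_iff_map_eq_zero]
  rintro ⟨f, hf⟩ hfe
  have hletter2 : f (letter 2) = 0 := congrFun hfe 0
  have hletter3 : f (letter 3) = 0 := congrFun hfe 1
  have hletter4 : f (letter 4) = 0 := congrFun hfe 2
  have hid (T : Fin 6) : _ = (0 : K) := (operatorIdentity_apply f T).symm.trans (congrFun hf T)
  have hsplit0 : a * f word + b * f (triple 0) = 0 := by
    simpa [factorSplit, hletter3, hletter4] using hid 0
  have hsplit1 : a * f word + b * f (letter 0) + c * f (triple 1) = 0 := by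
    simpa [factorSplit, hletter4] using hid 1
  have hsplit3 : a * f (triple 0) + b * f (letter 0) + c * f (letter 1) = 0 := by
    simpa [factorSplit, hletter2] using hid 3
  have hsplit4 : a * f (triple 1) + b * f (letter 1) = 0 := by
    simpa [factorSplit, hletter2, hletter3] using hid 4
  have htriple2 : f (triple 2) = 0 := by
    simpa [factorSplit, hletter2, hletter3, hletter4, ha] using hid 5
  have hsplit2 : a * f word + b * f (letter 0) + c * f (letter 1) = 0 := by
    simpa [factorSplit, htriple2] using hid 2
  have cancel_add {x : K} (hx : (a + b) * x = 0) : x = 0 :=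
    (mul_eq_zero.1 hx).resolve_left hab
  have htriple1_eq : f (triple 1) = f (letter 1) :=
    mul_left_cancel₀ hc (by linear_combination hsplit1 - hsplit2)
  have hletter1 : f (letter 1) = 0 :=
    cancel_add (by linear_combination hsplit4 - a * htriple1_eq)
  have hword_eq : f word = f (triple 0) :=
    mul_left_cancel₀ ha (by linear_combination hsplit2 - hsplit3)
  have hword : f word = 0 :=
    cancel_add (by linear_combination hsplit0 + b * hword_eq)
  have hletter0 : f (letter 0) = 0 := by simpa [hword, hletter1, hb] using hsplit2
  have htriple0 : f (triple 0) = 0 := hword_eq ▸ hword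
  have htriple1 : f (triple 1) = 0 := htriple1_eq.trans hletter1
  ext (i | i | _)
  all_goals first | exact hword | fin_cases i <;> assumption

theorem evalLetters_bijective_of_injective {e : Fin 3 → Fin 5}
    (he : Function.Injective (evalLetters a b c d e)) :
    Function.Bijective (evalLetters a b c d e) := by
  have hdim : Module.finrank K (operatorIdentity a b c d).ker = 3 := by
    have hle := LinearMap.finrank_le_finrank_of_injective he
    have hrange := Submodule.finrank_le (operatorIdentity a b c d).range
    have hadd := (operatorIdentity a b c d).finrank_range_add_finrank_ker
    have hcard : Fintype.card OddFactor = 9 := rfl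
    simp only [Module.finrank_fintype_fun_eq_card, Fintype.card_fin, hcard] at hle hrange hadd
    lia
  refine ⟨he, (LinearMap.injective_iff_surjective_of_finrank_eq_finrank ?_).1 he⟩
  rw [hdim, Module.finrank_fin_fun]

theorem stmt_2_general (ha : a ≠ 0) (hb : b ≠ 0) (hc : c ≠ 0) (hab : a + b ≠ 0) :
    (consMatrix K a b c d).rank = 36 := by
  have hrank := rank_consMatrix_add_choose ha
    (evalLetters_bijective_of_injective (evalLetters_injective (d := d) ha hb hc hab))
  simpa [Nat.choose] using hrank

end Kernel

theorem X_add_X_ne_zero {σ R : Type*} [CommSemiring R] [Nontrivial R] {i j : σ} (hij : i ≠ j) :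
    (MvPolynomial.X i + MvPolynomial.X j : MvPolynomial σ R) ≠ 0 := by
  classical
  intro h
  simpa [hij.symm] using congrArg (MvPolynomial.eval (Pi.single i (1 : R))) h

/-- Over the field of fractions `K = Frac(ℚ[a,b,c,d])` of the polynomial ring in four
indeterminates, the matrix of consequences `M(a,b,c,d)`, with the four indeterminates
as parameters, has rank exactly 36. -/
theorem stmt_2 :
    (consMatrix (FractionRing (MvPolynomial (Fin 4) ℚ))
      (algebraMap (MvPolynomial (Fin 4) ℚ) _ (MvPolynomial.X 0))
      (algebraMap (MvPolynomial (Fin 4) ℚ) _ (MvPolynomial.X 1))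
      (algebraMap (MvPolynomial (Fin 4) ℚ) _ (MvPolynomial.X 2))
      (algebraMap (MvPolynomial (Fin 4) ℚ) _ (MvPolynomial.X 3))).rank = 36 := by
  have hne {p : MvPolynomial (Fin 4) ℚ} (hp : p ≠ 0) :
      algebraMap _ (FractionRing (MvPolynomial (Fin 4) ℚ)) p ≠ 0 := by simpa using hp
  exact stmt_2_general (hne (MvPolynomial.X_ne_zero 0)) (hne (MvPolynomial.X_ne_zero 1))
    (hne (MvPolynomial.X_ne_zero 2))
    (by simpa only [map_add] using hne (X_add_X_ne_zero Fin.zero_ne_one))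
end

section
/- Consider the one-parameter family of coefficient vectors (1,0,0,d). Over the field ℚ(t) of rational functions in one variable t, the matrix of consequences M(1,0,0,t) has rank exactly 32; moreover, over ℚ, the matrices M(1,0,0,0) and M(1,0,0,−1) each have rank exactly 27. -/
/-!
Row `i` of `M(1,0,0,d)` is the equation `x (p i) = -d * x (s i)`, so the matrix is the incidence
matrix of the directed multigraph with arrows `p i → s i`, every arrow carrying the gain `-d`.
Each vertex has a directed walk to a sink, and each connected component has exactly one sink `r`.
Hence a kernel vector is `x v = (-d) ^ depth v * x r`, and it is determined by its values at the
sinks. An arrow outside the chosen walks only requires `(-d) ^ a = (-d) ^ b` or `x r = 0`, where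
`a` and `b` are the lengths of two walks to `r`. There are 15 sinks. If `d = 0` or `d = -1`, no
value is constrained and the nullity is 15; otherwise the five components in which some vertex has
walks of lengths 1 and 2 contribute nothing, and the nullity is 10.
-/

/-- The incidence matrix of the directed multigraph with arrows `src e → tgt e` of constant gain
`-d`: its kernel consists of the `x` with `x (src e) = -d * x (tgt e)` for every arrow `e`.
A loop has the single entry `1 + d`. -/
def gainIncMatrix {E V K : Type*} [DecidableEq V] [Semiring K] (src tgt : E → V) (d : K) :
    Matrix E V K :=
  fun e ↦ Pi.single (src e) 1 + Pi.single (tgt e) d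

/-- A rooting of a directed multigraph at its sinks: every vertex `v` is joined to the sink `root v`
by a directed walk of length `depth v`, and `root` is constant on connected components. The walk is
encoded by its first arrow, which leads to a vertex of smaller depth. -/
structure SinkRooting {E V : Type*} (src tgt : E → V) where
  root : V → V
  depth : V → ℕ
  root_src : ∀ e, root (src e) = root (tgt e)
  depth_src_ne_zero : ∀ e, depth (src e) ≠ 0
  root_of_depth_eq_zero : ∀ v, depth v = 0 → root v = v
  exists_arrow : ∀ v, depth v ≠ 0 → ∃ e, src e = v ∧ depth v = depth (tgt e) + 1

section Kernel

variable {E V K : Type*} [Fintype V] [DecidableEq V] [CommRing K] {src tgt : E → V}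

theorem gainIncMatrix_mulVec (d : K) (x : V → K) (e : E) :
    (gainIncMatrix src tgt d).mulVec x e = x (src e) + d * x (tgt e) := by
  simp only [Matrix.mulVec, gainIncMatrix, add_dotProduct, single_dotProduct, one_mul]

theorem mem_ker_gainIncMatrix_iff {d : K} {x : V → K} :
    x ∈ (gainIncMatrix src tgt d).mulVecLin.ker ↔ ∀ e, x (src e) = -d * x (tgt e) := by
  simp only [LinearMap.mem_ker, Matrix.mulVecLin_apply, funext_iff, gainIncMatrix_mulVec,
    Pi.zero_apply, neg_mul, eq_neg_iff_add_eq_zero]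

end Kernel

namespace SinkRooting

variable {E V K : Type*} {src tgt : E → V} (R : SinkRooting src tgt)

theorem depth_root (v : V) : R.depth (R.root v) = 0 := by
  induction h : R.depth v generalizing v with
  | zero => rwa [R.root_of_depth_eq_zero v h]
  | succ n ih =>
    obtain ⟨e, rfl, he⟩ := R.exists_arrow v (by omega)
    rw [R.root_src, ih (tgt e) (by omega)]

section Balanced

variable [CommRing K]

/-- The component of the sink `r` is balanced for the gain `-d`: the potential `(-d) ^ depth`
satisfies the equations of all its arrows. -/
def IsBalanced (d : K) (r : V) : Prop :=
  ∀ e, R.root (src e) = r → (-d) ^ R.depth (src e) = (-d) ^ (R.depth (tgt e) + 1)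

variable {R}

theorem isBalanced_of_eq_zero_or_eq_neg_one {d : K} (hd : d = 0 ∨ d = -1) (r : V) :
    R.IsBalanced d r := by
  intro e _
  rcases hd with rfl | rfl
  · rw [neg_zero, zero_pow (R.depth_src_ne_zero e), zero_pow (Nat.succ_ne_zero _)]
  · simp only [neg_neg, one_pow]

theorem isBalanced_iff_depth_src [IsDomain K] {d : K} (hd₀ : d ≠ 0) (hd₁ : d ≠ -1)
    (hR : ∀ e, R.depth (src e) = R.depth (tgt e) + 1 ∨ R.depth (src e) = R.depth (tgt e)) {r : V} :
    R.IsBalanced d r ↔ ∀ e, R.root (src e) = r → R.depth (src e) = R.depth (tgt e) + 1 := by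
  refine forall₂_congr fun e _ ↦ ⟨fun hpow ↦ (hR e).resolve_right fun heq ↦ ?_, fun h ↦ by rw [h]⟩
  rw [heq, pow_succ, left_eq_mul₀ (pow_ne_zero _ (neg_ne_zero.2 hd₀))] at hpow
  exact hd₁ (neg_eq_iff_eq_neg.1 hpow)

end Balanced

section Kernel

variable [Fintype V] [DecidableEq V] [CommRing K] {d : K} {x : V → K}

theorem apply_eq_pow_depth_mul (hx : x ∈ (gainIncMatrix src tgt d).mulVecLin.ker) (v : V) :
    x v = (-d) ^ R.depth v * x (R.root v) := by
  induction h : R.depth v generalizing v with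
  | zero => rw [R.root_of_depth_eq_zero v h, pow_zero, one_mul]
  | succ n ih =>
    obtain ⟨e, rfl, he⟩ := R.exists_arrow v (by omega)
    rw [mem_ker_gainIncMatrix_iff.1 hx e, ih (tgt e) (by omega), R.root_src, pow_succ', mul_assoc]

variable {R}

theorem apply_eq_zero_of_not_isBalanced [IsDomain K]
    (hx : x ∈ (gainIncMatrix src tgt d).mulVecLin.ker) {r : V} (hr : ¬ R.IsBalanced d r) :
    x r = 0 := by
  simp only [IsBalanced, not_forall] at hr
  obtain ⟨e, rfl, hpow⟩ := hr
  refine (mul_eq_mul_right_iff.1 ?_).resolve_left hpow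
  calc (-d) ^ R.depth (src e) * x (R.root (src e))
      = x (src e) := (R.apply_eq_pow_depth_mul hx _).symm
    _ = -d * x (tgt e) := mem_ker_gainIncMatrix_iff.1 hx e
    _ = (-d) ^ (R.depth (tgt e) + 1) * x (R.root (src e)) := by
      rw [R.apply_eq_pow_depth_mul hx (tgt e), R.root_src, pow_succ', mul_assoc]

theorem pow_depth_mul_mem_ker {c : V → K} (hc : ∀ r, ¬ R.IsBalanced d r → c r = 0) :
    (fun v ↦ (-d) ^ R.depth v * c (R.root v)) ∈ (gainIncMatrix src tgt d).mulVecLin.ker := by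
  refine mem_ker_gainIncMatrix_iff.2 fun e ↦ ?_
  by_cases hr : R.IsBalanced d (R.root (src e))
  · rw [hr e rfl, R.root_src, pow_succ', mul_assoc]
  · rw [← R.root_src, hc _ hr, mul_zero, mul_zero, mul_zero]

end Kernel

section Rank

variable [Fintype V] [DecidableEq V] [Field K]

/-- Evaluation of kernel vectors at the balanced sinks. -/
def evalBalancedSinks (d : K) :
    (gainIncMatrix src tgt d).mulVecLin.ker →ₗ[K]
      ({r // R.depth r = 0 ∧ R.IsBalanced d r} → K) :=
  LinearMap.funLeft K K Subtype.val ∘ₗ Submodule.subtype _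

theorem evalBalancedSinks_injective (d : K) : Function.Injective (R.evalBalancedSinks d) := by
  refine (injective_iff_map_eq_zero _).2 fun x hx ↦ Subtype.ext <| funext fun v ↦ ?_
  have hroot : x.1 (R.root v) = 0 := by
    by_cases hr : R.IsBalanced d (R.root v)
    · exact congrFun hx ⟨R.root v, R.depth_root v, hr⟩
    · exact apply_eq_zero_of_not_isBalanced x.2 hr
  rw [R.apply_eq_pow_depth_mul x.2 v, hroot]
  exact mul_zero _

theorem evalBalancedSinks_surjective (d : K) : Function.Surjective (R.evalBalancedSinks d) := by
  intro c
  have hzero : ∀ r, ¬ R.IsBalanced d r → Function.extend Subtype.val c 0 r = 0 := fun r hr ↦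
    Function.extend_apply' _ _ _ fun ⟨r', hr'⟩ ↦ hr (hr' ▸ r'.2.2)
  refine ⟨⟨_, pow_depth_mul_mem_ker hzero⟩, funext fun r ↦ ?_⟩
  change (-d) ^ R.depth r * Function.extend Subtype.val c 0 (R.root r) = c r
  rw [R.root_of_depth_eq_zero r r.2.1, r.2.1, pow_zero, one_mul,
    Subtype.val_injective.extend_apply]

theorem rank_add_card_isBalanced (d : K) :
    (gainIncMatrix src tgt d).rank + Nat.card {r // R.depth r = 0 ∧ R.IsBalanced d r} =
      Fintype.card V := by
  classical
  have hker := (LinearEquiv.ofBijective (R.evalBalancedSinks d)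
    ⟨R.evalBalancedSinks_injective d, R.evalBalancedSinks_surjective d⟩).finrank_eq
  have hrank := LinearMap.finrank_range_add_finrank_ker (gainIncMatrix src tgt d).mulVecLin
  rwa [hker, Module.finrank_fintype_fun_eq_card, Module.finrank_fintype_fun_eq_card,
    ← Nat.card_eq_fintype_card] at hrank

end Rank

end SinkRooting

theorem colP_bounds (i : Fin 42) : 1 ≤ colP i ∧ colP i ≤ 42 := by decide +revert

theorem colS_bounds (i : Fin 42) : 1 ≤ colS i ∧ colS i ≤ 42 := by decide +revert

/-- The column `p_i`, counted from zero. -/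
def srcCol (i : Fin 42) : Fin 42 := ⟨colP i - 1, by have := colP_bounds i; omega⟩

/-- The column `s_i`, counted from zero. -/
def tgtCol (i : Fin 42) : Fin 42 := ⟨colS i - 1, by have := colS_bounds i; omega⟩

theorem consMatrix_one_zero_zero {K : Type*} [Field K] (d : K) :
    consMatrix K 1 0 0 d = gainIncMatrix srcCol tgtCol d := by
  ext i j
  have hp : (j : ℕ) + 1 = colP i ↔ j = srcCol i := by
    have := colP_bounds i
    simp only [srcCol, Fin.ext_iff]
    omega
  have hs : (j : ℕ) + 1 = colS i ↔ j = tgtCol i := by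
    have := colS_bounds i
    simp only [tgtCol, Fin.ext_iff]
    omega
  simp only [consMatrix, gainIncMatrix, Pi.add_apply, Pi.single_apply, hp, hs, ite_self, add_zero]

/-- The end of the first arrow leaving the column `v`, or `v` itself if `v` is a sink. -/
def nextCol (v : Fin 42) : Fin 42 :=
  ((List.finRange 42).find? (srcCol · = v)).elim v tgtCol

/-- The rooting of the arrows `p_i → s_i` whose walks follow `nextCol`. -/
def consRooting : SinkRooting srcCol tgtCol where
  root v := nextCol (nextCol v)
  -- Two steps along `nextCol` reach a sink from every column.
  depth v := if nextCol v = v then 0 else if nextCol (nextCol v) = nextCol v then 1 else 2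
  root_src := by decide +kernel
  depth_src_ne_zero := by decide +kernel
  root_of_depth_eq_zero := by decide +kernel
  exists_arrow := by decide +kernel

theorem consRooting_depth_srcCol (i : Fin 42) :
    consRooting.depth (srcCol i) = consRooting.depth (tgtCol i) + 1 ∨
      consRooting.depth (srcCol i) = consRooting.depth (tgtCol i) := by
  decide +kernel +revert

theorem card_sinks : Fintype.card {r // consRooting.depth r = 0} = 15 := by
  decide +kernel

theorem card_graded_sinks :
    Fintype.card {r // consRooting.depth r = 0 ∧ ∀ i, consRooting.root (srcCol i) = r →
      consRooting.depth (srcCol i) = consRooting.depth (tgtCol i) + 1} = 10 := by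
  decide +kernel

theorem rank_consMatrix_of_ne {K : Type*} [Field K] {d : K} (hd₀ : d ≠ 0) (hd₁ : d ≠ -1) :
    (consMatrix K 1 0 0 d).rank = 32 := by
  have h := consRooting.rank_add_card_isBalanced d
  simp only [SinkRooting.isBalanced_iff_depth_src hd₀ hd₁ consRooting_depth_srcCol,
    Nat.card_eq_fintype_card, card_graded_sinks, Fintype.card_fin] at h
  rw [consMatrix_one_zero_zero]
  omega

theorem rank_consMatrix_of_eq {K : Type*} [Field K] {d : K} (hd : d = 0 ∨ d = -1) :
    (consMatrix K 1 0 0 d).rank = 27 := by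
  have h := consRooting.rank_add_card_isBalanced d
  simp only [SinkRooting.isBalanced_of_eq_zero_or_eq_neg_one hd, and_true,
    Nat.card_eq_fintype_card, card_sinks, Fintype.card_fin] at h
  rw [consMatrix_one_zero_zero]
  omega

theorem ratFunc_X_ne_neg_one {K : Type*} [Field K] : (RatFunc.X : RatFunc K) ≠ -1 := fun h ↦ by
  simpa only [RatFunc.intDegree_X, RatFunc.intDegree_neg, RatFunc.intDegree_one, one_ne_zero]
    using congrArg RatFunc.intDegree h

theorem stmt_3_general {K : Type*} [Field K] (d : K) :
    (d ≠ 0 → d ≠ -1 → (consMatrix K 1 0 0 d).rank = 32) ∧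
      (d = 0 ∨ d = -1 → (consMatrix K 1 0 0 d).rank = 27) :=
  ⟨rank_consMatrix_of_ne, rank_consMatrix_of_eq⟩

/-- For the one-parameter family `(1,0,0,d)`: over the rational function field `ℚ(t)`
the matrix of consequences `M(1,0,0,t)` has rank exactly 32, and over `ℚ` the matrices
`M(1,0,0,0)` and `M(1,0,0,-1)` each have rank exactly 27. -/
theorem stmt_3 :
    (consMatrix (RatFunc ℚ) 1 0 0 RatFunc.X).rank = 32 ∧
    (consMatrix ℚ 1 0 0 0).rank = 27 ∧
    (consMatrix ℚ 1 0 0 (-1)).rank = 27 :=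
  ⟨(stmt_3_general RatFunc.X).1 RatFunc.X_ne_zero ratFunc_X_ne_neg_one,
    (stmt_3_general 0).2 (.inl rfl), (stmt_3_general (-1)).2 (.inr rfl)⟩
end

section
/- Consider the one-parameter family of coefficient vectors (1,−1,c,−1). Over the field ℚ(t) of rational functions in one variable t, the matrix of consequences M(1,−1,t,−1) has rank exactly 32; moreover, over ℚ, the matrices M(1,−1,1,−1) and M(1,−1,−1,−1) each have rank exactly 27. (The vector (1,−1,−1,−1) corresponds to the ternary derivation identity L(xyz) = L(x)yz + xL(y)z + xyL(z).) -/
/-! The columns of the matrix are labelled by the monomials `s(A, B)`, where `L` acts on two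
compatible subwords `A`, `B` of odd length of `x₁x₂x₃x₄x₅`. Its rows say that `L` applied to a
product of three factors expands as `L(xyz) = L(x)yz - c xL(y)z + xyL(z)`, with a second `L`
acting on some `B`. So a kernel vector is determined by its values on pairs of letters, which
may be prescribed freely as far as the expansions are consistent. The three expansions of
`L(x₁x₂x₃x₄x₅)` agree up to multiples of `(1 - c²) L(x₃)`, hence the kernel consists of the
symmetric functions on pairs of letters, where `x₃` has to be omitted if `c² ≠ 1`. Its dimension
is `5 * 6 / 2 = 15` if `c² = 1` and `4 * 5 / 2 = 10` otherwise. -/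

open Module

/-- A subword of odd length of `x₁x₂x₃x₄x₅`, that is, a possible argument of `L`: the letter
`xₖ₊₁`, the triple `xₖ₊₁xₖ₊₂xₖ₊₃`, or the whole word. -/
inductive Subword
  | letter (k : Fin 5)
  | triple (k : Fin 3)
  | whole
  deriving DecidableEq, Fintype

namespace Subword

/-- The positions occupied by a subword. -/
def positions : Subword → Finset (Fin 5)
  | letter k => {k}
  | triple k => {l | (k : ℕ) ≤ l ∧ (l : ℕ) ≤ k + 2}
  | whole => Finset.univ

/-- Two subwords are compatible when `L` can be applied to both within one monomial. -/
def Compatible (A B : Subword) : Prop :=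
  A.positions ⊆ B.positions ∨ B.positions ⊆ A.positions ∨ Disjoint A.positions B.positions

instance (A B : Subword) : Decidable (A.Compatible B) :=
  inferInstanceAs (Decidable (_ ∨ _ ∨ _))

end Subword

/-- A way of writing a subword as a product of three subwords: a triple as its three letters, or
the whole word as two letters and one triple, the latter being the `k`-th factor. -/
inductive Splitting
  | ofTriple (k : Fin 3)
  | ofWhole (k : Fin 3)
  deriving Fintype

namespace Splitting

/-- The product of the three factors of a splitting. -/
def product : Splitting → Subword
  | ofTriple k => .triple k
  | ofWhole _ => .whole

/-- The three factors of a splitting, from left to right. -/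
def factor : Splitting → Fin 3 → Subword
  | ofTriple k, i => .letter ⟨k + i, by lia⟩
  | ofWhole k, i =>
    if i < k then .letter ⟨i, by lia⟩ else if i = k then .triple k else .letter ⟨i + 2, by lia⟩

/-- A subword is compatible with a splitting when `L` can be applied to it in every term of the
corresponding consequence of the operator identity. -/
def Compatible (σ : Splitting) (B : Subword) : Prop :=
  σ.product.Compatible B ∧ ∀ i, (σ.factor i).Compatible B

instance (σ : Splitting) (B : Subword) : Decidable (σ.Compatible B) :=
  inferInstanceAs (Decidable (_ ∧ _))

end Splitting

open Subword in
/-- The monomial labelling each column of the matrix of consequences: `s(A, B)` stands for the word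
`x₁x₂x₃x₄x₅` with `L` applied to the subwords `A` and `B`. -/
def monomial : Fin 42 → Sym2 Subword :=
  ![s(whole, whole), s(triple 0, whole), s(triple 0, triple 0), s(letter 0, whole),
    s(letter 0, triple 0), s(letter 0, letter 0), s(whole, triple 1), s(whole, letter 1),
    s(triple 0, letter 1), s(whole, triple 2), s(whole, letter 2), s(triple 0, letter 2),
    s(whole, letter 3), s(whole, letter 4), s(triple 0, letter 3), s(triple 0, letter 4),
    s(letter 0, triple 1), s(letter 0, letter 1), s(letter 0, triple 2), s(letter 0, letter 2),
    s(letter 0, letter 3), s(letter 0, letter 4), s(triple 1, triple 1), s(letter 1, triple 1),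
    s(letter 1, letter 1), s(triple 1, letter 2), s(triple 1, letter 3), s(triple 1, letter 4),
    s(letter 1, triple 2), s(letter 1, letter 2), s(letter 1, letter 3), s(letter 1, letter 4),
    s(triple 2, triple 2), s(letter 2, triple 2), s(letter 2, letter 2), s(triple 2, letter 3),
    s(triple 2, letter 4), s(letter 2, letter 3), s(letter 2, letter 4), s(letter 3, letter 3),
    s(letter 3, letter 4), s(letter 4, letter 4)]

/-- The 1-indexed column `n` of the matrix of consequences is labelled by the monomial `m`. -/
def IsColumn (n : ℕ) (m : Sym2 Subword) : Prop :=
  ∃ j : Fin 42, (j : ℕ) + 1 = n ∧ monomial j = m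

instance (n : ℕ) (m : Sym2 Subword) : Decidable (IsColumn n m) :=
  inferInstanceAs (Decidable (∃ _, _))

/-- Row `i` of the matrix of consequences is the operator identity for the factors of `σ`, with a
further `L` applied to `B` in each term. -/
def IsConsequence (i : Fin 42) (σ : Splitting) (B : Subword) : Prop :=
  IsColumn (colP i) s(σ.product, B) ∧ IsColumn (colQ i) s(σ.factor 0, B) ∧
    IsColumn (colR i) s(σ.factor 1, B) ∧ IsColumn (colS i) s(σ.factor 2, B)

instance (i : Fin 42) (σ : Splitting) (B : Subword) : Decidable (IsConsequence i σ B) :=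
  inferInstanceAs (Decidable (_ ∧ _))

lemma monomial_injective : Function.Injective monomial := by
  decide +kernel

lemma exists_monomial_eq_iff_compatible :
    ∀ A B : Subword, (∃ j, monomial j = s(A, B)) ↔ A.Compatible B := by
  decide +kernel

lemma exists_isConsequence_of_row : ∀ i, ∃ σ B, σ.Compatible B ∧ IsConsequence i σ B := by
  decide +kernel

lemma exists_row_isConsequence :
    ∀ (σ : Splitting) (B : Subword), σ.Compatible B → ∃ i, IsConsequence i σ B := by
  decide +kernel

lemma Subword.compatible_letter : ∀ (A : Subword) (k : Fin 5), A.Compatible (letter k) := by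
  decide +kernel

lemma Subword.Compatible.exists_splitting : ∀ {A B : Subword}, A.Compatible B →
    (∃ k, A = letter k) ∨ ∃ σ : Splitting, σ.product = A ∧ σ.Compatible B := by
  decide +kernel

lemma Splitting.card_positions_factor_lt : ∀ (σ : Splitting) (i : Fin 3),
    (σ.factor i).positions.card < σ.product.positions.card := by
  decide +kernel

lemma Splitting.compatible_letter (σ : Splitting) (k : Fin 5) : σ.Compatible (.letter k) :=
  ⟨Subword.compatible_letter _ k, fun _ ↦ Subword.compatible_letter _ k⟩

section Kernel

variable {K : Type*} [Field K]

/-- `F`, read as a linear functional on monomials, vanishes on all consequences of the operator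
identity with coefficients `a`, `b`, `c`, `d`. The values of `F` at incompatible pairs, which label
no monomial, are unconstrained. -/
def AnnihilatesConsequences (a b c d : K) (F : Sym2 Subword → K) : Prop :=
  ∀ (σ : Splitting) (B : Subword), σ.Compatible B →
    a * F s(σ.product, B) + b * F s(σ.factor 0, B) + c * F s(σ.factor 1, B) +
      d * F s(σ.factor 2, B) = 0

lemma IsColumn.sum_ite_mul {n : ℕ} {m : Sym2 Subword} (h : IsColumn n m) (a : K)
    (F : Sym2 Subword → K) :
    ∑ j : Fin 42, (if (j : ℕ) + 1 = n then a else 0) * F (monomial j) = a * F m := by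
  obtain ⟨j, rfl, rfl⟩ := h
  simp [Fin.val_inj]

lemma IsConsequence.consMatrix_mulVec {i : Fin 42} {σ : Splitting} {B : Subword}
    (h : IsConsequence i σ B) (a b c d : K) (F : Sym2 Subword → K) :
    (consMatrix K a b c d).mulVec (F ∘ monomial) i =
      a * F s(σ.product, B) + b * F s(σ.factor 0, B) + c * F s(σ.factor 1, B) +
        d * F s(σ.factor 2, B) := by
  obtain ⟨hP, hQ, hR, hS⟩ := h
  simp only [Matrix.mulVec, dotProduct, consMatrix, Function.comp_apply, add_mul,
    Finset.sum_add_distrib, hP.sum_ite_mul, hQ.sum_ite_mul, hR.sum_ite_mul, hS.sum_ite_mul]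

lemma consMatrix_mulVec_eq_zero_iff_s5 {a b c d : K} {F : Sym2 Subword → K} :
    (consMatrix K a b c d).mulVec (F ∘ monomial) = 0 ↔ AnnihilatesConsequences a b c d F := by
  constructor
  · intro h σ B hσ
    obtain ⟨i, hi⟩ := exists_row_isConsequence σ B hσ
    rw [← hi.consMatrix_mulVec, h, Pi.zero_apply]
  · intro h
    funext i
    obtain ⟨σ, B, hσ, hi⟩ := exists_isConsequence_of_row i
    rw [hi.consMatrix_mulVec, h σ B hσ, Pi.zero_apply]

namespace AnnihilatesConsequences

variable {a b c d : K} {F G : Sym2 Subword → K}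

lemma sub (hF : AnnihilatesConsequences a b c d F) (hG : AnnihilatesConsequences a b c d G) :
    AnnihilatesConsequences a b c d (F - G) := by
  intro σ B hσ
  simp only [Pi.sub_apply]
  linear_combination hF σ B hσ - hG σ B hσ

lemma eq_zero_of_left_letters (hF : AnnihilatesConsequences a b c d F) (ha : a ≠ 0) {B : Subword}
    (hB : ∀ k, F s(.letter k, B) = 0) (A : Subword) (hAB : A.Compatible B) : F s(A, B) = 0 := by
  obtain ⟨k, rfl⟩ | ⟨σ, rfl, hσ⟩ := hAB.exists_splitting
  · exact hB k
  · have factor_eq_zero (i : Fin 3) : F s(σ.factor i, B) = 0 :=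
      eq_zero_of_left_letters hF ha hB (σ.factor i) (hσ.2 i)
    simpa [factor_eq_zero, ha] using hF σ B hσ
termination_by A.positions.card
decreasing_by subst_vars; exact σ.card_positions_factor_lt i

lemma eq_zero_of_letters (hF : AnnihilatesConsequences a b c d F) (ha : a ≠ 0)
    (hletters : ∀ k l, F s(.letter k, .letter l) = 0) {A B : Subword} (hAB : A.Compatible B) :
    F s(A, B) = 0 := by
  refine hF.eq_zero_of_left_letters ha (fun k ↦ ?_) A hAB
  rw [Sym2.eq_swap]
  exact hF.eq_zero_of_left_letters ha (fun l ↦ hletters l k) B (B.compatible_letter k)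

-- Compares the expansions of `L(x₁x₂x₃x₄x₅)` through `(x₁x₂x₃)x₄x₅` and through `x₁(x₂x₃x₄)x₅`.
lemma one_sub_sq_mul_middle_letter (hF : AnnihilatesConsequences 1 (-1) c (-1) F) (l : Fin 5) :
    (1 - c ^ 2) * F s(.letter 2, .letter l) = 0 := by
  have expand (σ : Splitting) := hF σ (.letter l) (σ.compatible_letter l)
  have h₁₂₃ : 1 * F s(.triple 0, .letter l) + -1 * F s(.letter 0, .letter l) +
      c * F s(.letter 1, .letter l) + -1 * F s(.letter 2, .letter l) = 0 := expand (.ofTriple 0)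
  have h₂₃₄ : 1 * F s(.triple 1, .letter l) + -1 * F s(.letter 1, .letter l) +
      c * F s(.letter 2, .letter l) + -1 * F s(.letter 3, .letter l) = 0 := expand (.ofTriple 1)
  have hleft : 1 * F s(.whole, .letter l) + -1 * F s(.triple 0, .letter l) +
      c * F s(.letter 3, .letter l) + -1 * F s(.letter 4, .letter l) = 0 := expand (.ofWhole 0)
  have hmid : 1 * F s(.whole, .letter l) + -1 * F s(.letter 0, .letter l) +
      c * F s(.triple 1, .letter l) + -1 * F s(.letter 4, .letter l) = 0 := expand (.ofWhole 1)
  linear_combination hmid - hleft - h₁₂₃ - c * h₂₃₄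

end AnnihilatesConsequences

namespace Subword

/-- The value at `k` is the coefficient of `L(xₖ₊₁)` in `L(A)`, expanded into `L` applied to
single letters by means of `L(xyz) = L(x)yz - c xL(y)z + xyL(z)`. For the whole word the middle
coefficient depends on the chosen expansion unless `c ^ 2 = 1`; the value recorded is that of
`(x₁x₂x₃)x₄x₅`. -/
def weight (c : K) : Subword → Fin 5 → K
  | letter k => Pi.single k 1
  | triple k => fun l ↦
      if (l : ℕ) = k ∨ (l : ℕ) = k + 2 then 1 else if (l : ℕ) = k + 1 then -c else 0
  | whole => ![1, -c, 1, -c, 1]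

end Subword

lemma Splitting.weight_product {c : K} {k : Fin 5} (hk : k = 2 → c ^ 2 = 1) (σ : Splitting) :
    σ.product.weight c k =
      (σ.factor 0).weight c k - c * (σ.factor 1).weight c k + (σ.factor 2).weight c k := by
  rcases σ with i | i <;> fin_cases i <;> fin_cases k <;>
    simp [product, factor, Subword.weight, ← sq, hk]

/-- The values of a functional on the pairs of letters with positions in `P`. -/
def restrictToLetters (P : Finset (Fin 5)) (F : Sym2 Subword → K) : Sym2 P → K :=
  fun z ↦ F (z.map fun k ↦ .letter k.1)

/-- The functional on monomials that takes the values `g` on the pairs of letters with positions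
in `P`, vanishes on the other pairs of letters, and is extended to longer subwords by expanding
them into letters. -/
def extendFromLetters (c : K) (P : Finset (Fin 5)) :
    (Sym2 P → K) →ₗ[K] (Sym2 Subword → K) where
  toFun g := Sym2.lift ⟨fun A B ↦ ∑ k : P, ∑ l : P, A.weight c k * B.weight c l * g s(k, l), by
    intro A B
    refine Finset.sum_comm.trans (Finset.sum_congr rfl fun l _ ↦ Finset.sum_congr rfl fun k _ ↦ ?_)
    rw [mul_comm (A.weight c k), Sym2.eq_swap]⟩
  map_add' g h := by
    ext ⟨A, B⟩
    simp [mul_add, Finset.sum_add_distrib]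
  map_smul' r g := by
    ext ⟨A, B⟩
    simp [Finset.mul_sum, mul_left_comm]

section ExtendFromLetters

variable {c : K} {P : Finset (Fin 5)}

lemma extendFromLetters_mk (g : Sym2 P → K) (A B : Subword) :
    extendFromLetters c P g s(A, B) =
      ∑ k : P, ∑ l : P, A.weight c k * B.weight c l * g s(k, l) :=
  rfl

lemma extendFromLetters_letters (g : Sym2 P → K) (k l : P) :
    extendFromLetters c P g s(.letter k, .letter l) = g s(k, l) := by
  simp [extendFromLetters_mk, Subword.weight, Pi.single_apply]

lemma annihilatesConsequences_extendFromLetters (hP : ∀ k ∈ P, k = 2 → c ^ 2 = 1)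
    (g : Sym2 P → K) : AnnihilatesConsequences 1 (-1) c (-1) (extendFromLetters c P g) := by
  intro σ B _
  simp only [extendFromLetters_mk, Finset.mul_sum, ← Finset.sum_add_distrib]
  refine Finset.sum_eq_zero fun k _ ↦ Finset.sum_eq_zero fun l _ ↦ ?_
  linear_combination B.weight c l * g s(k, l) * σ.weight_product (hP k k.2)

lemma AnnihilatesConsequences.eq_extendFromLetters (hP : ∀ k, k ∈ P ↔ (k = 2 → c ^ 2 = 1))
    {F : Sym2 Subword → K} (hF : AnnihilatesConsequences 1 (-1) c (-1) F) {A B : Subword}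
    (hAB : A.Compatible B) :
    F s(A, B) = extendFromLetters c P (restrictToLetters P F) s(A, B) := by
  have hsub := hF.sub (annihilatesConsequences_extendFromLetters (fun k ↦ (hP k).1)
    (restrictToLetters P F))
  set D := F - extendFromLetters c P (restrictToLetters P F)
  have hD {k : Fin 5} (hk : k ∉ P) (l : Fin 5) : D s(.letter k, .letter l) = 0 := by
    obtain ⟨rfl, hc⟩ := Classical.not_imp.1 (mt (hP k).2 hk)
    exact (mul_eq_zero.1 (hsub.one_sub_sq_mul_middle_letter l)).resolve_left
      (sub_ne_zero.2 (Ne.symm hc))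
  refine sub_eq_zero.1 (hsub.eq_zero_of_letters one_ne_zero (fun k l ↦ ?_) hAB)
  by_cases hk : k ∈ P
  · by_cases hl : l ∈ P
    · have hvalue := extendFromLetters_letters (c := c) (restrictToLetters P F) ⟨k, hk⟩ ⟨l, hl⟩
      exact sub_eq_zero.2 hvalue.symm
    · rw [Sym2.eq_swap, hD hl]
  · exact hD hk l

lemma range_extendFromLetters_eq_ker (hP : ∀ k, k ∈ P ↔ (k = 2 → c ^ 2 = 1)) :
    LinearMap.range (LinearMap.funLeft K K monomial ∘ₗ extendFromLetters c P) =
      LinearMap.ker (consMatrix K 1 (-1) c (-1)).mulVecLin := by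
  ext f
  rw [LinearMap.mem_range, LinearMap.mem_ker, Matrix.mulVecLin_apply]
  constructor
  · rintro ⟨g, rfl⟩
    exact consMatrix_mulVec_eq_zero_iff_s5.2
      (annihilatesConsequences_extendFromLetters (fun k ↦ (hP k).1) g)
  · intro hf
    obtain ⟨F, rfl⟩ : ∃ F : Sym2 Subword → K, F ∘ monomial = f :=
      ⟨Function.extend monomial f 0, Function.extend_comp monomial_injective f 0⟩
    refine ⟨restrictToLetters P F, funext fun j ↦ ?_⟩
    obtain ⟨A, B, hAB⟩ : ∃ A B, s(A, B) = monomial j :=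
      (Sym2.exists (f := (· = monomial j))).1 ⟨_, rfl⟩
    have hcompat : A.Compatible B := (exists_monomial_eq_iff_compatible A B).1 ⟨j, hAB.symm⟩
    simpa [LinearMap.funLeft_apply, ← hAB] using
      ((consMatrix_mulVec_eq_zero_iff_s5.1 hf).eq_extendFromLetters hP hcompat).symm

lemma injective_funLeft_comp_extendFromLetters :
    Function.Injective (LinearMap.funLeft K K monomial ∘ₗ extendFromLetters c P) := by
  intro g h hgh
  ext ⟨k, l⟩
  obtain ⟨j, hj⟩ := (exists_monomial_eq_iff_compatible (.letter k) (.letter l)).2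
    (Subword.compatible_letter _ _)
  simpa [LinearMap.funLeft_apply, hj, extendFromLetters_letters] using congrFun hgh j

lemma rank_consMatrix_add_choose_s5 (hP : ∀ k, k ∈ P ↔ (k = 2 → c ^ 2 = 1)) :
    (consMatrix K 1 (-1) c (-1)).rank + (P.card + 1).choose 2 = 42 := by
  have hker : finrank K (LinearMap.ker (consMatrix K 1 (-1) c (-1)).mulVecLin) =
      (P.card + 1).choose 2 := by
    rw [← range_extendFromLetters_eq_ker hP,
      LinearMap.finrank_range_of_inj injective_funLeft_comp_extendFromLetters,
      finrank_fintype_fun_eq_card, Sym2.card, Fintype.card_coe]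
  rw [← hker, Matrix.rank, LinearMap.finrank_range_add_finrank_ker, finrank_fin_fun]

end ExtendFromLetters

theorem stmt_5_general (c : K) :
    (c ^ 2 ≠ 1 → (consMatrix K 1 (-1) c (-1)).rank = 32) ∧
    (c ^ 2 = 1 → (consMatrix K 1 (-1) c (-1)).rank = 27) := by
  constructor <;> intro hc
  · have hrank := rank_consMatrix_add_choose_s5 (c := c) (P := {2}ᶜ) (by simp [hc])
    exact Nat.add_right_cancel hrank
  · have hrank := rank_consMatrix_add_choose_s5 (c := c) (P := Finset.univ) (by simp [hc])
    exact Nat.add_right_cancel hrank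

lemma ratFunc_X_sq_ne_one : (RatFunc.X : RatFunc K) ^ 2 ≠ 1 := fun h ↦
  RatFunc.transcendental_X (K := K) (.of_pow two_pos (h ▸ isAlgebraic_one))

end Kernel

/-- For the one-parameter family `(1,-1,c,-1)`: over the rational function field `ℚ(t)`
the matrix of consequences `M(1,-1,t,-1)` has rank exactly 32, and over `ℚ` the matrices
`M(1,-1,1,-1)` and `M(1,-1,-1,-1)` (the latter corresponding to the ternary derivation
identity) each have rank exactly 27. -/
theorem stmt_5 :
    (consMatrix (RatFunc ℚ) 1 (-1) RatFunc.X (-1)).rank = 32 ∧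
    (consMatrix ℚ 1 (-1) 1 (-1)).rank = 27 ∧
    (consMatrix ℚ 1 (-1) (-1) (-1)).rank = 27 :=
  ⟨(stmt_5_general RatFunc.X).1 ratFunc_X_sq_ne_one, (stmt_5_general 1).2 (by norm_num),
    (stmt_5_general (-1)).2 (by norm_num)⟩
end
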